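/- Let γ, δ₀ and the test measures be as in the space curve setup, and write x₀ = γ(0) and R = R(0) = 1/‖γ''(0)‖. Then there exist constants C > 0 and δ₁ ∈ (0, δ₀] such that for all δ ∈ (0, δ₁] and all σ, ε > 0 with max(σ, ε) ≤ δ/4, writing y = γ(δ), one has | W₁(μ_{x₀}^{σ,ε}, μ_y^{σ,ε}) − ‖x₀ − y‖·(1 + σ²/(4R²) − ε²/(6R²)) | ≤ C·δ⁴. -/

import Mathlib

open MeasureTheory Set

/-- The 1-Wasserstein distance: infimum over couplings of the integral of the distance. -/
noncomputable def W1 {X : Type*} [MeasurableSpace X] [PseudoMetricSpace X]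
    (μ ν : Measure X) : ℝ :=
  sInf { c : ℝ | ∃ π : Measure (X × X), IsProbabilityMeasure π ∧
      π.map Prod.fst = μ ∧ π.map Prod.snd = ν ∧ c = ∫ p, dist p.1 p.2 ∂π }

/-- Restriction of the ambient volume measure to a set, normalized to a probability measure. -/
noncomputable def normRestrict {X : Type*} [MeasureSpace X] (s : Set X) : Measure X :=
  (volume s)⁻¹ • volume.restrict s

/-- The cross product on Euclidean 3-space. -/
noncomputable def cross3 (u v : EuclideanSpace ℝ (Fin 3)) : EuclideanSpace ℝ (Fin 3) :=
  (WithLp.equiv 2 (Fin 3 → ℝ)).symm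
    ![(WithLp.equiv 2 (Fin 3 → ℝ) u) 1 * (WithLp.equiv 2 (Fin 3 → ℝ) v) 2 -
        (WithLp.equiv 2 (Fin 3 → ℝ) u) 2 * (WithLp.equiv 2 (Fin 3 → ℝ) v) 1,
      (WithLp.equiv 2 (Fin 3 → ℝ) u) 2 * (WithLp.equiv 2 (Fin 3 → ℝ) v) 0 -
        (WithLp.equiv 2 (Fin 3 → ℝ) u) 0 * (WithLp.equiv 2 (Fin 3 → ℝ) v) 2,
      (WithLp.equiv 2 (Fin 3 → ℝ) u) 0 * (WithLp.equiv 2 (Fin 3 → ℝ) v) 1 -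
        (WithLp.equiv 2 (Fin 3 → ℝ) u) 1 * (WithLp.equiv 2 (Fin 3 → ℝ) v) 0]

/-!
A tube segment is the image of the cylinder `(-ε, ε) × B(0, σ)` under the normal coordinates of the
curve, whose Jacobian is `1 - ⟪κ, x⟫` for the curvature vector `κ`. The map
`x ↦ x + (σ² - ‖x‖²) / 2 • κ` permutes the ball `B(0, σ)` and has the same Jacobian, so undoing it
in each slice before applying the normal coordinates turns the test measures at `0` and `δ` into
pushforwards of one uniform measure on the cylinder.

For the upper bound, couple the two pushforwards by reflecting arclength at `δ / 2`. In the normal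
frame obtained from the tangent at `0` by half-turns, all displacements are parallel to the
midpoint tangent `u = γ' (δ / 2)` up to `O(δ³)`, so by Pythagoras their lengths are their components
along `u` up to `O(δ⁵)`. For the lower bound, test against the `1`-Lipschitz function `⟪·, u⟫`.
Hence `W₁` is the difference of the means of `⟪·, u⟫` up to `O(δ⁵)`.

Averaging over the reflections of the cylinder removes all odd terms, and the second moments of the
interval and of the ball give the mean
`⟪γ t, u⟫ + (ε² / 6 - σ² / (dim E + 1)) ⟪γ'' t, u⟫ + O(δ⁴)`.
The difference of the first terms is `‖γ δ - γ 0‖ + O(δ⁴)`, and since `⟪γ', γ⁽³⁾⟫ = -‖γ''‖²` the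
difference of `⟪γ'' t, u⟫` is `-‖γ'' 0‖² ‖γ δ - γ 0‖ + O(δ²)`.
-/

open scoped InnerProductSpace

section Wasserstein

variable {X Ω : Type*} [MeasurableSpace X] [PseudoMetricSpace X] [OpensMeasurableSpace X]
  [MeasurableSpace Ω]

lemma W1_map_map_le_integral_dist [SecondCountableTopology X] {ν : Measure Ω}
    [IsProbabilityMeasure ν] {A B : Ω → X} (hA : Measurable A) (hB : Measurable B) :
    W1 (ν.map A) (ν.map B) ≤ ∫ z, dist (A z) (B z) ∂ν := by
  have hAB : Measurable fun z => (A z, B z) := hA.prodMk hB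
  refine csInf_le ⟨0, ?_⟩ ⟨ν.map fun z => (A z, B z),
    Measure.isProbabilityMeasure_map hAB.aemeasurable, ?_, ?_, ?_⟩
  · rintro c ⟨π, -, -, -, rfl⟩
    exact integral_nonneg fun _ => dist_nonneg
  · rw [Measure.map_map measurable_fst hAB]; rfl
  · rw [Measure.map_map measurable_snd hAB]; rfl
  · rw [integral_map hAB.aemeasurable measurable_dist.aestronglyMeasurable]

lemma integrable_of_lipschitzWith_of_ae_mem {μ : Measure X} [IsFiniteMeasure μ] {s : Set X}
    (hs : Bornology.IsBounded s) (hμ : ∀ᵐ x ∂μ, x ∈ s) {K : NNReal} {f : X → ℝ}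
    (hf : LipschitzWith K f) : Integrable f μ := by
  obtain ⟨C, hC⟩ := (hf.isBounded_image hs).exists_norm_le
  refine .of_bound hf.continuous.measurable.aestronglyMeasurable C ?_
  filter_upwards [hμ] with x hx using hC _ (mem_image_of_mem f hx)

/- Boundedness is what makes the cost of every coupling integrable, so that no coupling has
cost `0` by convention. -/
lemma integral_sub_integral_le_W1 [SecondCountableTopology X] {μ ν : Measure X}
    [IsProbabilityMeasure μ] [IsProbabilityMeasure ν] {s : Set X} (hs : Bornology.IsBounded s)
    (hμ : ∀ᵐ x ∂μ, x ∈ s) (hν : ∀ᵐ x ∂ν, x ∈ s) {f : X → ℝ} (hf : LipschitzWith 1 f) :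
    ∫ x, f x ∂ν - ∫ x, f x ∂μ ≤ W1 μ ν := by
  refine le_csInf ⟨_, μ.prod ν, inferInstance, by simp, by simp, rfl⟩ ?_
  rintro c ⟨π, hπ, rfl, rfl, rfl⟩
  have hfint := integrable_of_lipschitzWith_of_ae_mem hs hμ hf
  have gint := integrable_of_lipschitzWith_of_ae_mem hs hν hf
  have hf₁ : Integrable (fun p : X × X => f p.1) π := hfint.comp_measurable measurable_fst
  have hf₂ : Integrable (fun p : X × X => f p.2) π := gint.comp_measurable measurable_snd
  have hdist : Integrable (fun p : X × X => dist p.1 p.2) π :=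
    integrable_of_lipschitzWith_of_ae_mem (hs.prod hs)
      ((ae_of_ae_map measurable_fst.aemeasurable hμ).and
        (ae_of_ae_map measurable_snd.aemeasurable hν)) (LipschitzWith.dist)
  rw [integral_map measurable_fst.aemeasurable hfint.1,
    integral_map measurable_snd.aemeasurable gint.1, ← integral_sub hf₂ hf₁]
  refine integral_mono (hf₂.sub hf₁) hdist fun p => ?_
  have := hf.dist_le_mul p.2 p.1
  rw [NNReal.coe_one, one_mul, Real.dist_eq, dist_comm] at this
  exact (le_abs_self _).trans this

end Wasserstein

section InnerCost

variable {Ω E : Type*} [MeasurableSpace Ω] [NormedAddCommGroup E] [InnerProductSpace ℝ E]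
  [SecondCountableTopology E] [MeasurableSpace E] [BorelSpace E] {ν : Measure Ω}
  [IsProbabilityMeasure ν] {f g : Ω → E} {ρ : Ω → Ω} {u : E} {M c : ℝ}

/- The coupling behind this bound is `z ↦ (f z, g (ρ z))`. -/
lemma W1_map_map_le_of_measurePreserving (hf : Measurable f) (hg : Measurable g)
    (hρ : MeasurePreserving ρ ν ν) (hfi : Integrable (fun z => ⟪f z, u⟫_ℝ) ν)
    (hgi : Integrable (fun z => ⟪g z, u⟫_ℝ) ν)
    (hle : ∀ᵐ z ∂ν, ‖g (ρ z) - f z‖ ≤ ⟪g (ρ z) - f z, u⟫_ℝ + c) :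
    W1 (ν.map f) (ν.map g) ≤ ∫ z, ⟪g z, u⟫_ℝ ∂ν - ∫ z, ⟪f z, u⟫_ℝ ∂ν + c := by
  have hgρ : Integrable (fun z => ⟪g (ρ z), u⟫_ℝ) ν := hρ.integrable_comp_of_integrable hgi
  have hdiff : Integrable (fun z => ⟪g (ρ z), u⟫_ℝ - ⟪f z, u⟫_ℝ) ν := hgρ.sub hfi
  have hmap : ν.map (g ∘ ρ) = ν.map g := by rw [← Measure.map_map hg hρ.measurable, hρ.map_eq]
  have hρint : ∫ z, ⟪g (ρ z), u⟫_ℝ ∂ν = ∫ z, ⟪g z, u⟫_ℝ ∂ν := by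
    conv_rhs => rw [← hρ.map_eq]
    exact (integral_map hρ.measurable.aemeasurable
      (hg.inner_const (c := u)).aestronglyMeasurable).symm
  calc W1 (ν.map f) (ν.map g) ≤ ∫ z, dist (f z) (g (ρ z)) ∂ν := by
        rw [← hmap]
        exact W1_map_map_le_integral_dist hf (hg.comp hρ.measurable)
    _ ≤ ∫ z, (⟪g (ρ z), u⟫_ℝ - ⟪f z, u⟫_ℝ + c) ∂ν := by
        refine integral_mono_of_nonneg (.of_forall fun _ => dist_nonneg)
          (hdiff.add (integrable_const c)) ?_
        filter_upwards [hle] with z hz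
        rwa [dist_comm, dist_eq_norm, ← inner_sub_left]
    _ = _ := by
        rw [integral_add hdiff (integrable_const c), integral_sub hgρ hfi, hρint, integral_const,
          probReal_univ, one_smul]

lemma integral_inner_sub_integral_inner_le_W1_map_map (hf : Measurable f) (hg : Measurable g)
    (hu : ‖u‖ = 1) (hfM : ∀ᵐ z ∂ν, ‖f z‖ ≤ M) (hgM : ∀ᵐ z ∂ν, ‖g z‖ ≤ M) :
    ∫ z, ⟪g z, u⟫_ℝ ∂ν - ∫ z, ⟪f z, u⟫_ℝ ∂ν ≤ W1 (ν.map f) (ν.map g) := by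
  have hball : ∀ {k : Ω → E}, Measurable k → (∀ᵐ z ∂ν, ‖k z‖ ≤ M) →
      ∀ᵐ x ∂ν.map k, x ∈ Metric.closedBall 0 M := fun hk hkM =>
    (ae_map_iff hk.aemeasurable Metric.isClosed_closedBall.measurableSet).2 (by simpa using hkM)
  have hlip : LipschitzWith 1 fun x : E => ⟪x, u⟫_ℝ := .of_dist_le_mul fun x y => by
    rw [Real.dist_eq, ← inner_sub_left, dist_eq_norm, NNReal.coe_one, one_mul]
    simpa [hu] using abs_real_inner_le_norm (x - y) u
  have := Measure.isProbabilityMeasure_map (μ := ν) hf.aemeasurable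
  have := Measure.isProbabilityMeasure_map (μ := ν) hg.aemeasurable
  have hlower := integral_sub_integral_le_W1 Metric.isBounded_closedBall (hball hf hfM)
    (hball hg hgM) hlip
  rwa [integral_map hf.aemeasurable (by fun_prop), integral_map hg.aemeasurable (by fun_prop)]
    at hlower

lemma abs_W1_map_map_sub_le (hf : Measurable f) (hg : Measurable g)
    (hρ : MeasurePreserving ρ ν ν) (hu : ‖u‖ = 1) (hfM : ∀ᵐ z ∂ν, ‖f z‖ ≤ M)
    (hgM : ∀ᵐ z ∂ν, ‖g z‖ ≤ M)
    (hle : ∀ᵐ z ∂ν, ‖g (ρ z) - f z‖ ≤ ⟪g (ρ z) - f z, u⟫_ℝ + c) :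
    |W1 (ν.map f) (ν.map g) - (∫ z, ⟪g z, u⟫_ℝ ∂ν - ∫ z, ⟪f z, u⟫_ℝ ∂ν)| ≤ c := by
  have hupper := W1_map_map_le_of_measurePreserving hf hg hρ
    ((Integrable.of_bound hf.aestronglyMeasurable M hfM).inner_const u)
    ((Integrable.of_bound hg.aestronglyMeasurable M hgM).inner_const u) hle
  have hlower := integral_inner_sub_integral_inner_le_W1_map_map hf hg hu hfM hgM
  exact abs_le.2 ⟨by linarith, by linarith⟩

end InnerCost

lemma norm_le_inner_add_sq_div {E : Type*} [NormedAddCommGroup E] [InnerProductSpace ℝ E]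
    {u v : E} (hu : ‖u‖ = 1) {l m q : ℝ} (hm : 0 < m) (ha : m ≤ ⟪v, u⟫_ℝ)
    (hq : ‖v - l • u‖ ≤ q) : ‖v‖ ≤ ⟪v, u⟫_ℝ + q ^ 2 / m := by
  have hexp : ‖v - l • u‖ ^ 2 = ‖v‖ ^ 2 - 2 * l * ⟪v, u⟫_ℝ + l ^ 2 := by
    rw [norm_sub_sq_real, inner_smul_right, norm_smul, hu, mul_one, Real.norm_eq_abs, sq_abs]
    ring
  have hpyth : ‖v‖ ^ 2 ≤ ⟪v, u⟫_ℝ ^ 2 + q ^ 2 := by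
    nlinarith [sq_nonneg (l - ⟪v, u⟫_ℝ), pow_le_pow_left₀ (norm_nonneg _) hq 2]
  have hdiv : 0 ≤ q ^ 2 / m := by positivity
  refine (abs_le_of_sq_le_sq' ?_ (by linarith)).2
  have hmul : q ^ 2 = m * (q ^ 2 / m) := by field_simp
  nlinarith

section Taylor

variable {E : Type*} [NormedAddCommGroup E] [NormedSpace ℝ E] {f f₁ f₂ f₃ f₄ : ℝ → E}
  {t r s K : ℝ}

lemma norm_le_mul_abs_pow_succ {C : ℝ} {m : ℕ} (hC : 0 ≤ C) (hf : ∀ s, HasDerivAt f (f₁ s) s)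
    (h0 : f 0 = 0) (hb : ∀ s, |s| ≤ r → ‖f₁ s‖ ≤ C * |s| ^ m) (hs : |s| ≤ r) :
    ‖f s‖ ≤ C * |s| ^ (m + 1) := by
  have hbd : ∀ x ∈ Icc (-|s|) |s|, ‖f₁ x‖ ≤ C * |s| ^ m := fun x hx =>
    (hb x ((abs_le.2 hx).trans hs)).trans
      (mul_le_mul_of_nonneg_left (pow_le_pow_left₀ (abs_nonneg x) (abs_le.2 hx) m) hC)
  have hmv := (convex_Icc (-|s|) |s|).norm_image_sub_le_of_norm_hasDerivWithin_le
    (fun x _ => (hf x).hasDerivWithinAt) hbd ⟨neg_nonpos.2 (abs_nonneg s), abs_nonneg s⟩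
    ⟨neg_abs_le s, le_abs_self s⟩
  rwa [h0, sub_zero, sub_zero, Real.norm_eq_abs, mul_assoc, ← pow_succ] at hmv

lemma hasDerivAt_comp_add (hf : ∀ s, HasDerivAt f (f₁ s) s) (t s : ℝ) :
    HasDerivAt (fun s => f (t + s)) (f₁ (t + s)) s := by
  simpa using (hf (t + s)).comp_const_add t s

lemma hasDerivAt_comp_sub (hf : ∀ s, HasDerivAt f (f₁ s) s) (t s : ℝ) :
    HasDerivAt (fun s => f (t - s)) (-f₁ (t - s)) s := by
  simpa using (hf (t - s)).comp_const_sub t s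

lemma norm_sub_le_of_hasDerivAt (hf : ∀ s, HasDerivAt f (f₁ s) s)
    (hb : ∀ x, |x - t| ≤ r → ‖f₁ x‖ ≤ K) {a b : ℝ} (ha : |a - t| ≤ r) (hb' : |b - t| ≤ r) :
    ‖f b - f a‖ ≤ K * |b - a| :=
  (convex_closedBall t r).norm_image_sub_le_of_norm_hasDerivWithin_le
    (fun x _ => (hf x).hasDerivWithinAt) hb ha hb'

lemma norm_sub_sub_smul_le_of_hasDerivAt (hf : ∀ s, HasDerivAt f (f₁ s) s)
    (hf₁ : ∀ s, HasDerivAt f₁ (f₂ s) s) (hb : ∀ x, |x - t| ≤ r → ‖f₂ x‖ ≤ K) {a b : ℝ}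
    (ha : |a - t| ≤ r) (hb' : |b - t| ≤ r) : ‖f b - f a - (b - a) • f₁ a‖ ≤ K * |b - a| ^ 2 := by
  have hderiv : ∀ x ∈ uIcc a b,
      HasDerivWithinAt (fun x => f x - (x - a) • f₁ a) (f₁ x - f₁ a) (uIcc a b) x := fun x _ => by
    have hlin : HasDerivAt (fun x => (x - a) • f₁ a) ((1 : ℝ) • f₁ a) x :=
      ((hasDerivAt_id x).sub_const a).smul_const _
    rw [one_smul] at hlin
    exact ((hf x).sub hlin).hasDerivWithinAt
  have hbound : ∀ x ∈ uIcc a b, ‖f₁ x - f₁ a‖ ≤ K * |b - a| := fun x hx => by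
    have hxr : |x - t| ≤ r := by
      simp only [abs_le] at ha hb' ⊢
      rw [mem_uIcc] at hx
      constructor <;> rcases hx with hx | hx <;> linarith
    exact (norm_sub_le_of_hasDerivAt hf₁ hb ha hxr).trans (mul_le_mul_of_nonneg_left
      (abs_sub_left_of_mem_uIcc hx) ((norm_nonneg _).trans (hb a ha)))
  have hmean := (convex_uIcc a b).norm_image_sub_le_of_norm_hasDerivWithin_le hderiv hbound
    left_mem_uIcc right_mem_uIcc
  rw [Real.norm_eq_abs, mul_assoc, ← sq] at hmean
  convert hmean using 2
  simp only [sub_self, zero_smul, sub_zero]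
  abel

lemma norm_add_add_sub_two_smul_le (hK : 0 ≤ K) (hf : ∀ s, HasDerivAt f (f₁ s) s)
    (hf₁ : ∀ s, HasDerivAt f₁ (f₂ s) s) (hb : ∀ x, |x - t| ≤ r → ‖f₂ x‖ ≤ K) (hs : |s| ≤ r) :
    ‖f (t + s) + f (t - s) - (2 : ℝ) • f t‖ ≤ 2 * K * |s| ^ 2 := by
  refine norm_le_mul_abs_pow_succ (f := fun s => f (t + s) + f (t - s) - (2 : ℝ) • f t)
    (f₁ := fun s => f₁ (t + s) - f₁ (t - s)) (by positivity) (fun s => ?_) (by simp [two_smul])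
    (fun s hs => ?_) hs
  · exact (((hasDerivAt_comp_add hf t s).add (hasDerivAt_comp_sub hf t s)).sub_const _).congr_deriv
      (sub_eq_add_neg _ _).symm
  · have := norm_sub_le_of_hasDerivAt hf₁ hb (a := t - s) (b := t + s) (by simpa) (by simpa)
    rwa [show t + s - (t - s) = 2 * s by ring, abs_mul, abs_two, mul_left_comm,
      ← mul_assoc, ← pow_one |s|] at this

lemma norm_add_sub_sub_smul_le (hK : 0 ≤ K) (hf : ∀ s, HasDerivAt f (f₁ s) s)
    (hf₁ : ∀ s, HasDerivAt f₁ (f₂ s) s) (hf₂ : ∀ s, HasDerivAt f₂ (f₃ s) s)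
    (hb : ∀ x, |x - t| ≤ r → ‖f₃ x‖ ≤ K) (hs : |s| ≤ r) :
    ‖f (t + s) - f (t - s) - (2 * s) • f₁ t‖ ≤ 2 * K * |s| ^ 3 := by
  refine norm_le_mul_abs_pow_succ (f := fun s => f (t + s) - f (t - s) - (2 * s) • f₁ t)
    (f₁ := fun s => f₁ (t + s) + f₁ (t - s) - (2 : ℝ) • f₁ t) (by positivity) (fun s => ?_)
    (by simp) (fun s hs => norm_add_add_sub_two_smul_le hK hf₁ hf₂ hb hs) hs
  have hlin : HasDerivAt (fun s : ℝ => (2 * s) • f₁ t) ((2 : ℝ) • f₁ t) s := by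
    simpa using ((hasDerivAt_id s).const_mul 2).smul_const (f₁ t)
  exact (((hasDerivAt_comp_add hf t s).sub (hasDerivAt_comp_sub hf t s)).sub hlin).congr_deriv
    (by rw [sub_neg_eq_add])

lemma norm_add_add_sub_two_smul_sub_le (hK : 0 ≤ K) (hf : ∀ s, HasDerivAt f (f₁ s) s)
    (hf₁ : ∀ s, HasDerivAt f₁ (f₂ s) s) (hf₂ : ∀ s, HasDerivAt f₂ (f₃ s) s)
    (hf₃ : ∀ s, HasDerivAt f₃ (f₄ s) s) (hb : ∀ x, |x - t| ≤ r → ‖f₄ x‖ ≤ K) (hs : |s| ≤ r) :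
    ‖f (t + s) + f (t - s) - (2 : ℝ) • f t - s ^ 2 • f₂ t‖ ≤ 2 * K * |s| ^ 4 := by
  refine norm_le_mul_abs_pow_succ
    (f := fun s => f (t + s) + f (t - s) - (2 : ℝ) • f t - s ^ 2 • f₂ t)
    (f₁ := fun s => f₁ (t + s) - f₁ (t - s) - (2 * s) • f₂ t) (by positivity) (fun s => ?_)
    (by simp [two_smul]) (fun s hs => norm_add_sub_sub_smul_le hK hf₁ hf₂ hf₃ hb hs) hs
  have hsq : HasDerivAt (fun s : ℝ => s ^ 2 • f₂ t) ((2 * s) • f₂ t) s := by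
    simpa using ((hasDerivAt_id s).pow 2).smul_const (f₂ t)
  exact ((((hasDerivAt_comp_add hf t s).add (hasDerivAt_comp_sub hf t s)).sub_const _).sub
    hsq).congr_deriv (by rw [sub_eq_add_neg (f₁ (t + s))])

end Taylor

section NormRestrict

lemma isProbabilityMeasure_normRestrict {X : Type*} [MeasureSpace X] {s : Set X}
    (h0 : volume s ≠ 0) (htop : volume s ≠ ⊤) : IsProbabilityMeasure (normRestrict s) :=
  ⟨by simp [normRestrict, ENNReal.inv_mul_cancel h0 htop]⟩

lemma ae_mem_normRestrict {X : Type*} [MeasureSpace X] {s : Set X} (hs : MeasurableSet s) :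
    ∀ᵐ x ∂normRestrict s, x ∈ s :=
  Measure.ae_smul_measure (ae_restrict_mem hs) _

lemma integral_normRestrict {X : Type*} [MeasureSpace X] (s : Set X) (f : X → ℝ) :
    ∫ x, f x ∂normRestrict s = (volume.real s)⁻¹ * ∫ x in s, f x := by
  rw [normRestrict, integral_smul_measure, ENNReal.toReal_inv, smul_eq_mul, Measure.real]

lemma normRestrict_prod {X Y : Type*} [MeasureSpace X] [MeasureSpace Y]
    [SFinite (volume : Measure X)] [SFinite (volume : Measure Y)] {s : Set X} {t : Set Y}
    (h0 : volume s ≠ 0) (htop : volume s ≠ ⊤) :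
    normRestrict (s ×ˢ t) = (normRestrict s).prod (normRestrict t) := by
  simp only [normRestrict, Measure.volume_eq_prod, Measure.prod_prod, Measure.prod_smul_left,
    Measure.prod_smul_right, Measure.prod_restrict, smul_smul]
  rw [ENNReal.mul_inv (.inl h0) (.inl htop), mul_comm]

lemma measurePreserving_neg_normRestrict {G : Type*} [MeasureSpace G] [InvolutiveNeg G]
    [MeasurableNeg G] [(volume : Measure G).IsNegInvariant] {s : Set G} (hs : -s = s) :
    MeasurePreserving Neg.neg (normRestrict s) (normRestrict s) := by
  have := (Measure.measurePreserving_neg (volume : Measure G)).restrict_preimage_emb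
    (MeasurableEquiv.neg G).measurableEmbedding s
  rw [neg_preimage, hs] at this
  exact this.smul_measure _

/- Averaging over the four compositions of two symmetries of `ν` leaves the integral unchanged. -/
lemma abs_integral_sub_integral_le_of_symmetrization {Ω : Type*} [MeasurableSpace Ω]
    {ν : Measure Ω} [IsProbabilityMeasure ν] {ρ₁ ρ₂ : Ω → Ω} (h₁ : MeasurePreserving ρ₁ ν ν)
    (h₂ : MeasurePreserving ρ₂ ν ν) {G H : Ω → ℝ} (hG : Integrable G ν) (hH : Integrable H ν)
    {c : ℝ} (hle : ∀ᵐ z ∂ν,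
      |G z + G (ρ₁ z) + (G (ρ₂ z) + G (ρ₁ (ρ₂ z))) - 4 * H z| ≤ 4 * c) :
    |∫ z, G z ∂ν - ∫ z, H z ∂ν| ≤ c := by
  have hcomp : ∀ {ρ : Ω → Ω}, MeasurePreserving ρ ν ν → ∀ {f : Ω → ℝ}, Integrable f ν →
      Integrable (f ∘ ρ) ν ∧ ∫ z, f (ρ z) ∂ν = ∫ z, f z ∂ν := fun {ρ} hρ {f} hf =>
    ⟨hρ.integrable_comp_of_integrable hf, by
      rw [← integral_map hρ.aemeasurable (by rw [hρ.map_eq]; exact hf.aestronglyMeasurable),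
        hρ.map_eq]⟩
  obtain ⟨hG₁, h₁eq⟩ := hcomp h₁ hG
  obtain ⟨hG₂, h₂eq⟩ := hcomp h₂ hG
  obtain ⟨hG₁₂, h₁₂eq⟩ := hcomp h₂ hG₁
  have hbound := norm_integral_le_of_norm_le_const (by simpa only [← Real.norm_eq_abs] using hle)
  have hsum : ∫ z, (G z + G (ρ₁ z) + (G (ρ₂ z) + G (ρ₁ (ρ₂ z))) - 4 * H z) ∂ν =
      4 * (∫ z, G z ∂ν - ∫ z, H z ∂ν) := by
    change ∫ z, (G + G ∘ ρ₁ + (G ∘ ρ₂ + (G ∘ ρ₁) ∘ ρ₂)) z - 4 * H z ∂ν = _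
    rw [integral_sub ((hG.add hG₁).add (hG₂.add hG₁₂)) (hH.const_mul 4),
      integral_add' (hG.add hG₁) (hG₂.add hG₁₂), integral_add' hG hG₁, integral_add' hG₂ hG₁₂,
      integral_const_mul]
    simp only [Function.comp_apply] at h₁₂eq ⊢
    rw [h₁eq, h₂eq, h₁₂eq, h₁eq]
    ring
  rw [hsum, probReal_univ, mul_one, Real.norm_eq_abs, abs_mul, abs_of_pos four_pos] at hbound
  linarith

end NormRestrict

section Moments

lemma integral_sq_normRestrict_Ioo {ε : ℝ} (hε : 0 < ε) :
    ∫ s, s ^ 2 ∂normRestrict (Ioo (-ε) ε) = ε ^ 2 / 3 := by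
  rw [integral_normRestrict, Measure.real, Real.volume_Ioo,
    ← integral_Ioc_eq_integral_Ioo, ← intervalIntegral.integral_of_le (by linarith),
    integral_pow, ENNReal.toReal_ofReal (by linarith)]
  field_simp
  norm_num
  ring

variable {F : Type*} [NormedAddCommGroup F] [InnerProductSpace ℝ F] [FiniteDimensional ℝ F]
  [MeasurableSpace F] [BorelSpace F]

lemma setIntegral_ball_norm_pow [Nontrivial F] {σ : ℝ} (hσ : 0 < σ) (k : ℕ) :
    ∫ y in Metric.ball (0 : F) σ, ‖y‖ ^ k =
      Module.finrank ℝ F / (Module.finrank ℝ F + k) * σ ^ (Module.finrank ℝ F + k) *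
        volume.real (Metric.ball (0 : F) 1) := by
  have hd : 0 < Module.finrank ℝ F := Module.finrank_pos
  have hpolar := integral_fun_norm_addHaar (volume : Measure F)
    ((Iio σ).indicator fun r : ℝ => r ^ k)
  have hball : (Metric.ball (0 : F) σ).indicator (fun y => ‖y‖ ^ k) =
      fun y => (Iio σ).indicator (fun r : ℝ => r ^ k) ‖y‖ := by
    ext y; simp [indicator]
  have hradial : ∫ r in Ioi (0 : ℝ),
      r ^ (Module.finrank ℝ F - 1) • (Iio σ).indicator (fun r : ℝ => r ^ k) r =
        σ ^ (Module.finrank ℝ F + k) / (Module.finrank ℝ F + k) := by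
    simp_rw [smul_eq_mul, ← indicator_mul_right (Iio σ) (fun r : ℝ => r ^ (Module.finrank ℝ F - 1)),
      ← pow_add]
    rw [setIntegral_indicator measurableSet_Iio, Ioi_inter_Iio, ← integral_Ioc_eq_integral_Ioo,
      ← intervalIntegral.integral_of_le hσ.le, integral_pow]
    obtain ⟨m, hm⟩ : ∃ m, Module.finrank ℝ F = m + 1 := ⟨_, (Nat.sub_add_cancel hd).symm⟩
    simp [hm]
    ring
  rw [← integral_indicator measurableSet_ball, hball, hpolar, hradial, nsmul_eq_mul, smul_eq_mul]
  ring

lemma integral_norm_sq_normRestrict_ball {σ : ℝ} (hσ : 0 < σ) :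
    ∫ y, ‖y‖ ^ 2 ∂normRestrict (Metric.ball (0 : F) σ) =
      Module.finrank ℝ F / (Module.finrank ℝ F + 2) * σ ^ 2 := by
  rcases subsingleton_or_nontrivial F with _ | _
  · simp [Module.finrank_zero_of_subsingleton, Subsingleton.elim _ (0 : F)]
  have hd : (0 : ℝ) < Module.finrank ℝ F := Nat.cast_pos.2 Module.finrank_pos
  have hball : 0 < volume.real (Metric.ball (0 : F) 1) :=
    ENNReal.toReal_pos (Metric.measure_ball_pos _ _ one_pos).ne' measure_ball_lt_top.ne
  have hvol : volume.real (Metric.ball (0 : F) σ) =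
      σ ^ Module.finrank ℝ F * volume.real (Metric.ball (0 : F) 1) := by
    simpa [hd.ne'] using setIntegral_ball_norm_pow (F := F) hσ 0
  rw [integral_normRestrict, setIntegral_ball_norm_pow hσ, hvol, pow_add, Nat.cast_ofNat]
  field_simp

end Moments

section Flatten

lemma sq_mul_sq_add_two_mul_mul_eq_iff {k m r c : ℝ} (hm : 0 < m) (hr : 0 ≤ r) (hc : 0 ≤ c) :
    k ^ 2 * c ^ 2 + 2 * m * c = r ↔ c = r / (m + √(m ^ 2 + k ^ 2 * r)) := by
  constructor
  · rintro rfl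
    have hroot : √(m ^ 2 + k ^ 2 * (k ^ 2 * c ^ 2 + 2 * m * c)) = k ^ 2 * c + m := by
      rw [show m ^ 2 + k ^ 2 * (k ^ 2 * c ^ 2 + 2 * m * c) = (k ^ 2 * c + m) ^ 2 by ring]
      exact Real.sqrt_sq (by positivity)
    rw [hroot, eq_div_iff (by positivity)]
    ring
  · rintro rfl
    have hsq : √(m ^ 2 + k ^ 2 * r) ^ 2 = m ^ 2 + k ^ 2 * r := Real.sq_sqrt (by positivity)
    have : 0 < m + √(m ^ 2 + k ^ 2 * r) := by positivity
    field_simp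
    rw [add_sq, hsq]
    ring

lemma sq_sub_norm_sq_pos {F : Type*} [SeminormedAddCommGroup F] {σ : ℝ} {y : F} (hy : ‖y‖ < σ) :
    0 < σ ^ 2 - ‖y‖ ^ 2 :=
  sub_pos.2 (pow_lt_pow_left₀ hy (norm_nonneg y) two_ne_zero)

variable {F : Type*} [NormedAddCommGroup F] [InnerProductSpace ℝ F] {σ : ℝ} {κ x y : F}

/-- A map of the ball of radius `σ` onto itself whose Jacobian `1 - ⟪κ, x⟫` is that of the normal
coordinates of a curve with curvature vector `κ`: composing the normal coordinates with the inverse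
of `flatten` therefore preserves volume. -/
noncomputable def flatten (σ : ℝ) (κ x : F) : F :=
  x + ((σ ^ 2 - ‖x‖ ^ 2) / 2) • κ

/-- The displacement, in units of `κ`, between `y` and its preimage `x` under `flatten σ κ`. It is
the positive root `c` of `‖κ‖² c² + 2 (1 - ⟪κ, y⟫) c = σ² - ‖y‖²`, which says that
`σ² - ‖y - c κ‖² = 2 c`. -/
noncomputable def flattenShift (σ : ℝ) (κ y : F) : ℝ :=
  (σ ^ 2 - ‖y‖ ^ 2) /
    ((1 - ⟪κ, y⟫_ℝ) + √((1 - ⟪κ, y⟫_ℝ) ^ 2 + ‖κ‖ ^ 2 * (σ ^ 2 - ‖y‖ ^ 2)))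

lemma inner_lt_one_of_norm_lt (hκ : ‖κ‖ * σ < 1) (hy : ‖y‖ < σ) : ⟪κ, y⟫_ℝ < 1 :=
  ((real_inner_le_norm κ y).trans
    (mul_le_mul_of_nonneg_left hy.le (norm_nonneg κ))).trans_lt hκ

lemma flattenShift_pos (hκ : ‖κ‖ * σ < 1) (hy : ‖y‖ < σ) : 0 < flattenShift σ κ y := by
  have hm := sub_pos.2 (inner_lt_one_of_norm_lt hκ hy)
  have hr := sq_sub_norm_sq_pos hy
  unfold flattenShift
  positivity

lemma eq_flattenShift_iff {c : ℝ} (hκ : ‖κ‖ * σ < 1) (hy : ‖y‖ < σ) (hc : 0 ≤ c) :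
    c = flattenShift σ κ y ↔ σ ^ 2 - ‖y - c • κ‖ ^ 2 = 2 * c := by
  have hexp : ‖y - c • κ‖ ^ 2 = ‖y‖ ^ 2 - 2 * c * ⟪κ, y⟫_ℝ + c ^ 2 * ‖κ‖ ^ 2 := by
    rw [norm_sub_sq_real, inner_smul_right, norm_smul, mul_pow, Real.norm_eq_abs, sq_abs,
      real_inner_comm]
    ring
  rw [flattenShift, ← sq_mul_sq_add_two_mul_mul_eq_iff (sub_pos.2 (inner_lt_one_of_norm_lt hκ hy))
    (sq_sub_norm_sq_pos hy).le hc, hexp]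
  constructor <;> intro h <;> linarith

lemma sq_sub_norm_sub_flattenShift_smul_sq (hκ : ‖κ‖ * σ < 1) (hy : ‖y‖ < σ) :
    σ ^ 2 - ‖y - flattenShift σ κ y • κ‖ ^ 2 = 2 * flattenShift σ κ y :=
  (eq_flattenShift_iff hκ hy (flattenShift_pos hκ hy).le).1 rfl

lemma norm_sub_flattenShift_smul_lt (hκ : ‖κ‖ * σ < 1) (hy : ‖y‖ < σ) :
    ‖y - flattenShift σ κ y • κ‖ < σ :=
  lt_of_pow_lt_pow_left₀ 2 ((norm_nonneg y).trans hy.le) <| by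
    linarith [sq_sub_norm_sub_flattenShift_smul_sq hκ hy, flattenShift_pos hκ hy]

lemma flatten_sub_flattenShift_smul (hκ : ‖κ‖ * σ < 1) (hy : ‖y‖ < σ) :
    flatten σ κ (y - flattenShift σ κ y • κ) = y := by
  rw [flatten, sq_sub_norm_sub_flattenShift_smul_sq hκ hy, mul_div_cancel_left₀ _ two_ne_zero,
    sub_add_cancel]

lemma norm_flatten_lt (hκ : ‖κ‖ * σ < 1) (hx : ‖x‖ < σ) : ‖flatten σ κ x‖ < σ := by
  have hσ : 0 < σ := (norm_nonneg x).trans_lt hx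
  refine lt_of_pow_lt_pow_left₀ 2 hσ.le ?_
  set p := ‖κ‖ * ‖x‖
  have hpq : p ≤ ‖κ‖ * σ := mul_le_mul_of_nonneg_left hx.le (norm_nonneg κ)
  have : 0 ≤ p := by positivity
  have hinner : ⟪x, κ⟫_ℝ ≤ p := (real_inner_le_norm x κ).trans_eq (mul_comm _ _)
  have hfactor : 0 < 1 - ⟪x, κ⟫_ℝ - ((‖κ‖ * σ) ^ 2 - p ^ 2) / 4 := by
    nlinarith [mul_nonneg (norm_nonneg κ) hσ.le]
  have hexp : σ ^ 2 - ‖flatten σ κ x‖ ^ 2 =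
      (σ ^ 2 - ‖x‖ ^ 2) * (1 - ⟪x, κ⟫_ℝ - ((‖κ‖ * σ) ^ 2 - p ^ 2) / 4) := by
    rw [flatten, norm_add_sq_real, inner_smul_right, norm_smul, mul_pow, Real.norm_eq_abs, sq_abs]
    ring
  linarith [mul_pos (sq_sub_norm_sq_pos hx) hfactor]

lemma flattenShift_flatten (hκ : ‖κ‖ * σ < 1) (hx : ‖x‖ < σ) :
    flattenShift σ κ (flatten σ κ x) = (σ ^ 2 - ‖x‖ ^ 2) / 2 := by
  refine ((eq_flattenShift_iff hκ (norm_flatten_lt hκ hx) ?_).2 ?_).symm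
  · linarith [sq_sub_norm_sq_pos hx]
  · rw [flatten, add_sub_cancel_right]
    ring

lemma flattenShift_le (hκ : ‖κ‖ * σ < 1) (hy : ‖y‖ < σ) : flattenShift σ κ y ≤ σ ^ 2 / 2 := by
  linarith [sq_sub_norm_sub_flattenShift_smul_sq hκ hy,
    sq_nonneg ‖y - flattenShift σ κ y • κ‖]

lemma abs_flattenShift_sub_le (hκ : ‖κ‖ * σ < 1) (hy : ‖y‖ < σ) :
    |flattenShift σ κ y - (σ ^ 2 - ‖y‖ ^ 2) / 2| ≤ ‖κ‖ * σ ^ 3 / 2 := by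
  set c := flattenShift σ κ y
  have hσ : 0 < σ := (norm_nonneg y).trans_lt hy
  have hc : 0 < c := flattenShift_pos hκ hy
  have hx : ‖y - c • κ‖ < σ := norm_sub_flattenShift_smul_lt hκ hy
  have hdiff : |‖y‖ - ‖y - c • κ‖| ≤ c * ‖κ‖ := by
    refine (abs_norm_sub_norm_le _ _).trans_eq ?_
    rw [sub_sub_cancel, norm_smul, Real.norm_of_nonneg hc.le]
  have heq : c - (σ ^ 2 - ‖y‖ ^ 2) / 2 = (‖y‖ - ‖y - c • κ‖) * ((‖y‖ + ‖y - c • κ‖) / 2) := by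
    linear_combination -(sq_sub_norm_sub_flattenShift_smul_sq hκ hy) / 2
  calc |c - (σ ^ 2 - ‖y‖ ^ 2) / 2|
      = |‖y‖ - ‖y - c • κ‖| * ((‖y‖ + ‖y - c • κ‖) / 2) := by
        rw [heq, abs_mul, abs_of_nonneg (a := (‖y‖ + ‖y - c • κ‖) / 2) (by positivity)]
    _ ≤ (σ ^ 2 / 2 * ‖κ‖) * σ := by
        gcongr
        · exact hdiff.trans (by gcongr; exact flattenShift_le hκ hy)
        · linarith
    _ = ‖κ‖ * σ ^ 3 / 2 := by ring

end Flatten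

section ChangeOfVariables

variable {V E : Type*} [NormedAddCommGroup V] [NormedSpace ℝ V] [FiniteDimensional ℝ V]
  [MeasureSpace V] [BorelSpace V] [(volume : Measure V).IsAddHaarMeasure]
  [NormedAddCommGroup E] [NormedSpace ℝ E]
  [MeasureSpace E] [BorelSpace E]

lemma abs_det_eq_one_of_measurePreserving {A : V →L[ℝ] V}
    (hA : MeasurePreserving A (volume : Measure V) volume) (hdet : A.det ≠ 0) : |A.det| = 1 := by
  have hmap := Measure.map_linearMap_addHaar_eq_smul_addHaar (f := (A : V →ₗ[ℝ] V)) volume hdet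
  have hball := congrArg (fun μ : Measure V => μ (Metric.ball 0 1)) (hA.map_eq.symm.trans hmap)
  simp only [Measure.smul_apply, smul_eq_mul] at hball
  have hone := (ENNReal.mul_eq_right (Metric.measure_ball_pos volume (0 : V) one_pos).ne'
    measure_ball_lt_top.ne).1 hball.symm
  rw [ENNReal.ofReal_eq_one, abs_inv, inv_eq_one] at hone
  exact hone

lemma map_comp_restrict_image_eq_restrict_image {s : Set V} (hs : MeasurableSet s)
    {f h : V → V} {g : V → E} {f' : V → V →L[ℝ] V} {g' : V → V →L[ℝ] E} (J : V ≃L[ℝ] E)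
    (hJ : MeasurePreserving J (volume : Measure V) volume)
    (hf' : ∀ x ∈ s, HasFDerivAt f (f' x) x) (hg' : ∀ x ∈ s, HasFDerivAt g (g' x) x)
    (hginj : InjOn g s) (hhf : ∀ x ∈ s, h (f x) = x)
    (hf : Measurable f) (hg : Measurable g) (hh : Measurable h)
    (hdet : ∀ x ∈ s, |((J.symm : E →L[ℝ] V) ∘L g' x).det| = |(f' x).det|) :
    (volume.restrict (f '' s)).map (g ∘ h) = volume.restrict (g '' s) := by
  have hfinj : InjOn f s := fun x hx y hy hxy => by rw [← hhf x hx, hxy, hhf y hy]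
  have hJg' : ∀ x ∈ s, HasFDerivWithinAt (J.symm ∘ g) ((J.symm : E →L[ℝ] V) ∘L g' x) s x :=
    fun x hx => ((J.symm : E →L[ℝ] V).hasFDerivAt.comp x (hg' x hx)).hasFDerivWithinAt
  have hJg : volume.restrict (J.symm ∘ g '' s) =
      ((volume.restrict s).withDensity fun x => ENNReal.ofReal |(f' x).det|).map
        (J.symm ∘ g) := by
    rw [← map_withDensity_abs_det_fderiv_eq_addHaar volume hs.nullMeasurableSet hJg'
      (J.symm.injective.comp_injOn hginj)]
    congr 1
    refine withDensity_congr_ae ?_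
    filter_upwards [ae_restrict_mem hs] with x hx
    rw [hdet x hx]
  have hgrestrict : volume.restrict (g '' s) = (volume.restrict (J.symm ∘ g '' s)).map J := by
    have hpre := hJ.restrict_preimage_emb J.toHomeomorph.measurableEmbedding (g '' s)
    rw [← hpre.map_eq, image_comp, ← J.image_symm_eq_preimage]
  rw [hgrestrict, hJg, ← map_withDensity_abs_det_fderiv_eq_addHaar volume hs.nullMeasurableSet
    (fun x hx => (hf' x hx).hasFDerivWithinAt) hfinj, Measure.map_map (hg.comp hh) hf,
    Measure.map_map J.continuous.measurable (J.symm.continuous.measurable.comp hg)]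
  refine Measure.map_congr ((withDensity_absolutelyContinuous _ _).ae_le ?_)
  filter_upwards [ae_restrict_mem hs] with x hx
  simp only [Function.comp_apply, hhf x hx, J.apply_symm_apply]

lemma normRestrict_image_eq_map_normRestrict_image {s : Set V} (hs : MeasurableSet s)
    {f h : V → V} {g : V → E} {f' : V → V →L[ℝ] V} {g' : V → V →L[ℝ] E} (J : V ≃L[ℝ] E)
    (hJ : MeasurePreserving J (volume : Measure V) volume)
    (hf' : ∀ x ∈ s, HasFDerivAt f (f' x) x) (hg' : ∀ x ∈ s, HasFDerivAt g (g' x) x)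
    (hginj : InjOn g s) (hhf : ∀ x ∈ s, h (f x) = x)
    (hf : Measurable f) (hg : Measurable g) (hh : Measurable h)
    (hdet : ∀ x ∈ s, |((J.symm : E →L[ℝ] V) ∘L g' x).det| = |(f' x).det|) :
    normRestrict (g '' s) = (normRestrict (f '' s)).map (g ∘ h) := by
  have hmap := map_comp_restrict_image_eq_restrict_image hs J hJ hf' hg' hginj hhf hf hg hh hdet
  have hvol : volume (f '' s) = volume (g '' s) := by
    simpa [Measure.map_apply (hg.comp hh) MeasurableSet.univ] using congrArg (· univ) hmap
  rw [normRestrict, normRestrict, Measure.map_smul, hmap, hvol]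

end ChangeOfVariables

section Tube

variable {F : Type*} [NormedAddCommGroup F] [InnerProductSpace ℝ F]

/-- The parameter domain `(-ε, ε) × B(0, σ)` of a tube segment: arclength and offset in the normal
space. -/
def solidCylinder (F : Type*) [NormedAddCommGroup F] (σ ε : ℝ) : Set (ℝ × F) :=
  Ioo (-ε) ε ×ˢ Metric.ball 0 σ

lemma mem_solidCylinder {F : Type*} [NormedAddCommGroup F] {σ ε : ℝ} {p : ℝ × F} :
    p ∈ solidCylinder F σ ε ↔ |p.1| < ε ∧ ‖p.2‖ < σ := by
  simp [solidCylinder, abs_lt]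

/-- `flatten` in each normal slice, where `κ s` is the curvature vector at arclength `s`. -/
noncomputable def flattenMap (σ : ℝ) (κ : ℝ → F) (p : ℝ × F) : ℝ × F :=
  (p.1, flatten σ (κ p.1) p.2)

/-- The inverse of `flattenMap` on the cylinder. -/
noncomputable def unflattenMap (σ : ℝ) (κ : ℝ → F) (p : ℝ × F) : ℝ × F :=
  (p.1, p.2 - flattenShift σ (κ p.1) p.2 • κ p.1)

variable {σ ε : ℝ} {κ : ℝ → F}

lemma unflattenMap_flattenMap (hκ : ∀ s ∈ Ioo (-ε) ε, ‖κ s‖ * σ < 1) {p : ℝ × F}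
    (hp : p ∈ solidCylinder F σ ε) : unflattenMap σ κ (flattenMap σ κ p) = p := by
  rw [unflattenMap, flattenMap]
  simp only
  rw [flattenShift_flatten (hκ _ hp.1) (mem_ball_zero_iff.1 hp.2), flatten, add_sub_cancel_right]

lemma flattenMap_image_solidCylinder (hκ : ∀ s ∈ Ioo (-ε) ε, ‖κ s‖ * σ < 1) :
    flattenMap σ κ '' solidCylinder F σ ε = solidCylinder F σ ε := by
  refine Subset.antisymm ?_ fun p hp => ?_
  · rintro _ ⟨p, hp, rfl⟩
    exact ⟨hp.1, mem_ball_zero_iff.2 (norm_flatten_lt (hκ _ hp.1) (mem_ball_zero_iff.1 hp.2))⟩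
  · have hp2 := mem_ball_zero_iff.1 hp.2
    exact ⟨unflattenMap σ κ p,
      ⟨hp.1, mem_ball_zero_iff.2 (norm_sub_flattenShift_smul_lt (hκ _ hp.1) hp2)⟩,
      Prod.ext rfl (flatten_sub_flattenShift_smul (hκ _ hp.1) hp2)⟩

/-- The Fréchet derivative of `flattenMap` at `p`, where `κ'` is the derivative of the curvature
vector. -/
noncomputable def flattenMapDeriv (σ : ℝ) (κ : ℝ → F) (κ' : F) (p : ℝ × F) :
    ℝ × F →L[ℝ] ℝ × F :=
  (ContinuousLinearMap.fst ℝ ℝ F).prod <| ContinuousLinearMap.snd ℝ ℝ F +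
    (((σ ^ 2 - ‖p.2‖ ^ 2) / 2) • (ContinuousLinearMap.fst ℝ ℝ F).smulRight κ' -
      ((innerSL ℝ p.2) ∘L ContinuousLinearMap.snd ℝ ℝ F).smulRight (κ p.1))

lemma hasFDerivAt_flattenMap {κ' : F} {p : ℝ × F} (hκ : HasDerivAt κ κ' p.1) :
    HasFDerivAt (flattenMap σ κ) (flattenMapDeriv σ κ κ' p) p := by
  have hcurv : HasFDerivAt (fun q : ℝ × F => κ q.1)
      ((ContinuousLinearMap.fst ℝ ℝ F).smulRight κ') p := by
    refine (hκ.hasFDerivAt.comp p hasFDerivAt_fst).congr_fderiv ?_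
    ext <;> simp
  have hshift : HasFDerivAt (fun q : ℝ × F => (σ ^ 2 - ‖q.2‖ ^ 2) / 2)
      (-((innerSL ℝ p.2) ∘L ContinuousLinearMap.snd ℝ ℝ F)) p := by
    refine ((((hasStrictFDerivAt_norm_sq p.2).hasFDerivAt.comp p hasFDerivAt_snd).const_sub
      (σ ^ 2)).mul_const (2 : ℝ)⁻¹).congr_fderiv ?_
    ext <;> simp
  refine (hasFDerivAt_fst.prodMk (hasFDerivAt_snd.add (hshift.smul hcurv))).congr_fderiv ?_
  ext <;> simp [flattenMapDeriv, sub_eq_add_neg]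

lemma det_flattenMapDeriv [FiniteDimensional ℝ F] (κ' : F) (p : ℝ × F) :
    (flattenMapDeriv σ κ κ' p).det = 1 - ⟪κ p.1, p.2⟫_ℝ := by
  have hfactor : (flattenMapDeriv σ κ κ' p : ℝ × F →ₗ[ℝ] ℝ × F) =
      LinearMap.transvection (LinearMap.fst ℝ ℝ F) (0, ((σ ^ 2 - ‖p.2‖ ^ 2) / 2) • κ') ∘ₗ
      LinearMap.transvection (-((innerSL ℝ p.2 : F →ₗ[ℝ] ℝ) ∘ₗ LinearMap.snd ℝ ℝ F))
          (0, κ p.1) := by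
    ext <;> simp [flattenMapDeriv, LinearMap.transvection.apply, sub_eq_add_neg]
  rw [ContinuousLinearMap.det, hfactor, LinearMap.det_comp, LinearMap.transvection.det,
    LinearMap.transvection.det]
  simp [real_inner_comm, sub_eq_add_neg]

end Tube

section Sweep

variable {F E : Type*} [NormedAddCommGroup F] [InnerProductSpace ℝ F]
  [NormedAddCommGroup E] [InnerProductSpace ℝ E]

/-- An isometry `ℝ ⊕ F ≃ E` of Hilbert sums, regarded on the product `ℝ × F`, whose volume is the
product measure. -/
noncomputable def frameEquiv (q : WithLp 2 (ℝ × F) ≃ₗᵢ[ℝ] E) : (ℝ × F) ≃L[ℝ] E :=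
  (WithLp.prodContinuousLinearEquiv 2 ℝ ℝ F).symm.trans q.toContinuousLinearEquiv

lemma frameEquiv_apply (q : WithLp 2 (ℝ × F) ≃ₗᵢ[ℝ] E) (v : ℝ × F) :
    frameEquiv q v = q (WithLp.toLp 2 v) := rfl

lemma inner_frameEquiv (q : WithLp 2 (ℝ × F) ≃ₗᵢ[ℝ] E) (v w : ℝ × F) :
    ⟪frameEquiv q v, frameEquiv q w⟫_ℝ = v.1 * w.1 + ⟪v.2, w.2⟫_ℝ := by
  simp [frameEquiv_apply, WithLp.prod_inner_apply, mul_comm]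

lemma norm_frameEquiv_inr (q : WithLp 2 (ℝ × F) ≃ₗᵢ[ℝ] E) (y : F) :
    ‖frameEquiv q (0, y)‖ = ‖y‖ := by
  rw [norm_eq_sqrt_real_inner, inner_frameEquiv, mul_zero, zero_add, ← norm_eq_sqrt_real_inner]

lemma norm_frameEquiv_inl (q : WithLp 2 (ℝ × F) ≃ₗᵢ[ℝ] E) (r : ℝ) :
    ‖frameEquiv q (r, 0)‖ = |r| := by
  rw [norm_eq_sqrt_real_inner, inner_frameEquiv, inner_zero_left, add_zero,
    Real.sqrt_mul_self_eq_abs]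

lemma frameEquiv_symm_snd {q : WithLp 2 (ℝ × F) ≃ₗᵢ[ℝ] E} {w : E}
    (hw : ⟪frameEquiv q (1, 0), w⟫_ℝ = 0) : frameEquiv q (0, ((frameEquiv q).symm w).2) = w := by
  have hfst := inner_frameEquiv q (1, 0) ((frameEquiv q).symm w)
  rw [ContinuousLinearEquiv.apply_symm_apply, hw, one_mul, inner_zero_left, add_zero] at hfst
  rw [hfst, Prod.mk.eta, ContinuousLinearEquiv.apply_symm_apply]

lemma measurePreserving_frameEquiv [FiniteDimensional ℝ F] [MeasurableSpace F] [BorelSpace F]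
    [FiniteDimensional ℝ E] [MeasurableSpace E] [BorelSpace E]
    (q : WithLp 2 (ℝ × F) ≃ₗᵢ[ℝ] E) :
    MeasurePreserving (frameEquiv q) volume volume :=
  q.measurePreserving.comp (WithLp.volume_preserving_toLp ℝ F)

/-- The map sweeping a cylinder along the curve `g`: the slice at arclength `s` is placed at `g s`,
in the directions given by the moving frame `Q s`. -/
noncomputable def sweep (g : ℝ → E) (Q : ℝ → WithLp 2 (ℝ × F) ≃ₗᵢ[ℝ] E) (p : ℝ × F) : E :=
  g p.1 + frameEquiv (Q p.1) (0, p.2)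

variable {g : ℝ → E} {Q : ℝ → WithLp 2 (ℝ × F) ≃ₗᵢ[ℝ] E} {κ : ℝ → F}
  {Q' : ℝ × F →L[ℝ] E}

lemma hasFDerivAt_sweep {p : ℝ × F}
    (hg : HasDerivAt g (frameEquiv (Q p.1) (1, 0)) p.1)
    (hQ : HasDerivAt (fun s => (frameEquiv (Q s) : ℝ × F →L[ℝ] E)) Q' p.1) :
    HasFDerivAt (sweep g Q) ((frameEquiv (Q p.1) : ℝ × F →L[ℝ] E) +
      (ContinuousLinearMap.fst ℝ ℝ F).smulRight (Q' (0, p.2))) p := by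
  have hbase : HasFDerivAt (fun r : ℝ × F => g r.1)
      ((ContinuousLinearMap.fst ℝ ℝ F).smulRight (frameEquiv (Q p.1) (1, 0))) p := by
    refine (hg.hasFDerivAt.comp p hasFDerivAt_fst).congr_fderiv ?_
    ext <;> simp
  have hcomp : HasFDerivAt (fun r : ℝ × F => (frameEquiv (Q r.1) : ℝ × F →L[ℝ] E))
      ((ContinuousLinearMap.fst ℝ ℝ F).smulRight Q') p := by
    have hfst : HasFDerivAt Prod.fst (ContinuousLinearMap.fst ℝ ℝ F) p := hasFDerivAt_fst
    refine (HasFDerivAt.comp (G := ℝ × F →L[ℝ] E) p hQ.hasFDerivAt hfst).congr_fderiv ?_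
    ext <;> simp
  have hframe := hcomp.clm_apply
    ((ContinuousLinearMap.inr ℝ ℝ F).comp (ContinuousLinearMap.snd ℝ ℝ F)).hasFDerivAt
  refine (hbase.add hframe).congr_fderiv ?_
  ext v <;> simp

lemma hasDerivAt_frameEquiv_apply {s : ℝ} (v : ℝ × F)
    (hQ : HasDerivAt (fun s => (frameEquiv (Q s) : ℝ × F →L[ℝ] E)) Q' s) :
    HasDerivAt (fun s => frameEquiv (Q s) v) (Q' v) s := by
  simpa using hQ.clm_apply (hasDerivAt_const s v)

/- Differentiating the orthogonality of tangent and normal vectors. -/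
lemma inner_frameEquiv_deriv_frame {s : ℝ} {k : F} (y : F)
    (hQ : HasDerivAt (fun s => (frameEquiv (Q s) : ℝ × F →L[ℝ] E)) Q' s)
    (hk : Q' (1, 0) = frameEquiv (Q s) (0, k)) :
    ⟪frameEquiv (Q s) (1, 0), Q' (0, y)⟫_ℝ = -⟪k, y⟫_ℝ := by
  have hderiv := (hasDerivAt_frameEquiv_apply (1, 0) hQ).inner ℝ
    (hasDerivAt_frameEquiv_apply (0, y) hQ)
  simp only [inner_frameEquiv, hk, mul_zero, zero_add, inner_zero_left] at hderiv
  linarith [hderiv.unique (hasDerivAt_const s (0 : ℝ))]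

/-- On `I`, the frame `Q` is adapted to the unit-speed curve `g`: its first vector is the tangent
`g'`, the others span the normal space, and `κ` gives the frame coordinates of the curvature vector
`g''`. -/
structure IsAdaptedFrame (g : ℝ → E) (Q : ℝ → WithLp 2 (ℝ × F) ≃ₗᵢ[ℝ] E) (κ : ℝ → F)
    (I : Set ℝ) : Prop where
  hasDerivAt_curve : ∀ s ∈ I, HasDerivAt g (frameEquiv (Q s) (1, 0)) s
  hasDerivAt_tangent : ∀ s ∈ I,
    HasDerivAt (fun s => frameEquiv (Q s) (1, (0 : F))) (frameEquiv (Q s) (0, κ s)) s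
  exists_hasDerivAt_frame : ∀ s ∈ I,
    ∃ Q', HasDerivAt (fun s => (frameEquiv (Q s) : ℝ × F →L[ℝ] E)) Q' s
  differentiableAt_curvature : ∀ s ∈ I, DifferentiableAt ℝ κ s

lemma IsAdaptedFrame.exists_hasDerivAt_frame_apply {I : Set ℝ} (h : IsAdaptedFrame g Q κ I)
    {s : ℝ} (hs : s ∈ I) :
    ∃ Q', HasDerivAt (fun s => (frameEquiv (Q s) : ℝ × F →L[ℝ] E)) Q' s ∧
      Q' (1, 0) = frameEquiv (Q s) (0, κ s) := by
  obtain ⟨Q', hQ'⟩ := h.exists_hasDerivAt_frame s hs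
  exact ⟨Q', hQ', (hasDerivAt_frameEquiv_apply _ hQ').unique (h.hasDerivAt_tangent s hs)⟩

variable [FiniteDimensional ℝ F] [MeasurableSpace F] [BorelSpace F]
  [FiniteDimensional ℝ E] [MeasurableSpace E] [BorelSpace E]

instance isAddHaarMeasure_volume_prod : (volume : Measure (ℝ × F)).IsAddHaarMeasure :=
  Measure.prod.instIsAddHaarMeasure volume volume

lemma abs_det_symm_comp_frameEquiv (q r : WithLp 2 (ℝ × F) ≃ₗᵢ[ℝ] E) :
    |((frameEquiv q).symm ∘L (frameEquiv r : ℝ × F →L[ℝ] E)).det| = 1 := by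
  have hsymm : MeasurePreserving (frameEquiv q).symm volume volume :=
    (measurePreserving_frameEquiv q).symm (frameEquiv q).toHomeomorph.toMeasurableEquiv
  exact abs_det_eq_one_of_measurePreserving (hsymm.comp (measurePreserving_frameEquiv r))
    (LinearEquiv.isUnit_det' ((frameEquiv r).trans (frameEquiv q).symm).toLinearEquiv).ne_zero

lemma abs_det_symm_comp_deriv_sweep (q : WithLp 2 (ℝ × F) ≃ₗᵢ[ℝ] E) {p : ℝ × F} {k : F}
    (hQ : HasDerivAt (fun s => (frameEquiv (Q s) : ℝ × F →L[ℝ] E)) Q' p.1)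
    (hk : Q' (1, 0) = frameEquiv (Q p.1) (0, k)) :
    |((frameEquiv q).symm ∘L ((frameEquiv (Q p.1) : ℝ × F →L[ℝ] E) +
      (ContinuousLinearMap.fst ℝ ℝ F).smulRight (Q' (0, p.2)))).det| =
      |1 - ⟪k, p.2⟫_ℝ| := by
  set v := (frameEquiv (Q p.1)).symm (Q' (0, p.2)) with hv
  have hfactor : ((frameEquiv q).symm ∘L ((frameEquiv (Q p.1) : ℝ × F →L[ℝ] E) +
      (ContinuousLinearMap.fst ℝ ℝ F).smulRight (Q' (0, p.2))) :
        ℝ × F →L[ℝ] ℝ × F).toLinearMap =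
      (((frameEquiv q).symm : E →L[ℝ] ℝ × F) ∘L (frameEquiv (Q p.1) : ℝ × F →L[ℝ] E) :
        ℝ × F →L[ℝ] ℝ × F).toLinearMap ∘ₗ
        LinearMap.transvection (LinearMap.fst ℝ ℝ F) v := by
    ext <;> simp [LinearMap.transvection.apply, hv]
  have hv₁ : v.1 = -⟪k, p.2⟫_ℝ := by
    have := inner_frameEquiv (Q p.1) (1, 0) v
    rw [hv, ContinuousLinearEquiv.apply_symm_apply, inner_frameEquiv_deriv_frame p.2 hQ hk] at this
    simpa using this.symm
  rw [ContinuousLinearMap.det, hfactor, LinearMap.det_comp, LinearMap.transvection.det, abs_mul,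
    ← ContinuousLinearMap.det, abs_det_symm_comp_frameEquiv, one_mul, LinearMap.fst_apply, hv₁,
    sub_eq_add_neg]

variable {σ ε : ℝ}

lemma measurable_flattenMap (hκ : Measurable κ) : Measurable (flattenMap σ κ) := by
  unfold flattenMap flatten
  fun_prop

lemma measurable_unflattenMap (hκ : Measurable κ) : Measurable (unflattenMap σ κ) := by
  unfold unflattenMap flattenShift
  fun_prop

theorem normRestrict_image_sweep (hframe : IsAdaptedFrame g Q κ (Ioo (-ε) ε))
    (hκσ : ∀ s ∈ Ioo (-ε) ε, ‖κ s‖ * σ < 1) (hinj : InjOn (sweep g Q) (solidCylinder F σ ε))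
    (hsweep : Measurable (sweep g Q)) (hκ : Measurable κ) :
    normRestrict (sweep g Q '' solidCylinder F σ ε) =
      (normRestrict (solidCylinder F σ ε)).map (sweep g Q ∘ unflattenMap σ κ) := by
  choose! Q' hQ' hk using fun s hs => hframe.exists_hasDerivAt_frame_apply (s := s) hs
  have hpush := normRestrict_image_eq_map_normRestrict_image (s := solidCylinder F σ ε)
    (measurableSet_Ioo.prod measurableSet_ball)
    (frameEquiv (Q 0)) (measurePreserving_frameEquiv (Q 0))
    (fun p hp => hasFDerivAt_flattenMap (hframe.differentiableAt_curvature p.1 hp.1).hasDerivAt)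
    (fun p hp => hasFDerivAt_sweep (hframe.hasDerivAt_curve p.1 hp.1) (hQ' p.1 hp.1)) hinj
    (fun p hp => unflattenMap_flattenMap hκσ hp) (measurable_flattenMap hκ) hsweep
    (measurable_unflattenMap hκ) (fun p hp => by
      rw [det_flattenMapDeriv, abs_det_symm_comp_deriv_sweep _ (hQ' p.1 hp.1) (hk p.1 hp.1)])
  rwa [flattenMap_image_solidCylinder hκσ] at hpush

end Sweep

section HalfTurn

variable {E : Type*} [NormedAddCommGroup E] [InnerProductSpace ℝ E]

/-- The half-turn about the line spanned by `e + p`. For unit vectors it exchanges `e` and `p`, so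
it carries the normal space of `e` to the normal space of `p`. -/
noncomputable def halfTurn (e p : E) : E ≃ₗᵢ[ℝ] E := (ℝ ∙ (e + p)).reflection

lemma halfTurn_apply (e p x : E) :
    halfTurn e p x = (2 * ⟪e + p, x⟫_ℝ / ‖e + p‖ ^ 2) • (e + p) - x := by
  rw [halfTurn, Submodule.reflection_singleton_apply, ← Nat.cast_smul_eq_nsmul ℝ, smul_smul]
  simp [mul_div_assoc]

lemma halfTurn_symm (e p : E) : (halfTurn e p).symm = halfTurn e p :=
  Submodule.reflection_symm

lemma one_add_inner_ne_zero {e p : E} (he : ‖e‖ = 1) (hp : ‖p‖ = 1) (hne : e + p ≠ 0) :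
    1 + ⟪e, p⟫_ℝ ≠ 0 := by
  have hsq := norm_add_sq_real e p
  rw [he, hp] at hsq
  intro h
  exact hne (norm_eq_zero.1 (pow_eq_zero_iff two_ne_zero |>.1 (by linarith)))

lemma halfTurn_apply_eq {e p : E} (he : ‖e‖ = 1) (hp : ‖p‖ = 1) (x : E) :
    halfTurn e p x = (⟪e + p, x⟫_ℝ / (1 + ⟪e, p⟫_ℝ)) • (e + p) - x := by
  rw [halfTurn_apply, norm_add_sq_real, he, hp,
    show (1 : ℝ) ^ 2 + 2 * ⟪e, p⟫_ℝ + 1 ^ 2 = 2 * (1 + ⟪e, p⟫_ℝ) by ring,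
    mul_div_mul_left _ _ two_ne_zero]

lemma halfTurn_apply_self {e p : E} (he : ‖e‖ = 1) (hp : ‖p‖ = 1) (hne : e + p ≠ 0) :
    halfTurn e p e = p := by
  rw [halfTurn_apply_eq he hp, inner_add_left, real_inner_self_eq_norm_sq, he, one_pow,
    real_inner_comm, div_self (one_add_inner_ne_zero he hp hne), one_smul, add_sub_cancel_left]

lemma exists_hasDerivAt_halfTurn (e : E) {T : ℝ → E} {s : ℝ} (hT : DifferentiableAt ℝ T s)
    (hne : e + T s ≠ 0) :
    ∃ R', HasDerivAt (fun s => (halfTurn e (T s) : E →L[ℝ] E)) R' s := by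
  have hformula : (fun s => (halfTurn e (T s) : E →L[ℝ] E)) = fun s =>
      (2 / ‖e + T s‖ ^ 2) • ContinuousLinearMap.smulRightL ℝ E E (innerSL ℝ (e + T s)) (e + T s) -
        ContinuousLinearMap.id ℝ E := by
    ext s x
    simp only [halfTurn_apply, LinearIsometryEquiv.coe_coe'', sub_apply,
      smul_apply, ContinuousLinearMap.smulRightL_apply_apply,
      ContinuousLinearMap.smulRight_apply, innerSL_apply_apply, ContinuousLinearMap.id_apply,
      smul_smul, mul_div_right_comm]
  have hsum : DifferentiableAt ℝ (fun s => e + T s) s := hT.const_add e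
  rw [hformula]
  refine ⟨_, DifferentiableAt.hasDerivAt ?_⟩
  refine (DifferentiableAt.fun_smul ?_ ?_).sub_const _
  · exact (differentiableAt_const _).div (hsum.norm_sq ℝ) (by simpa using hne)
  · exact DifferentiableAt.clm_apply ((ContinuousLinearMap.smulRightL ℝ E E).differentiableAt.comp s
      ((innerSL ℝ).differentiableAt.comp s hsum)) hsum

end HalfTurn

section NormalFrame

variable {F E : Type*} [NormedAddCommGroup F] [InnerProductSpace ℝ F]
  [NormedAddCommGroup E] [InnerProductSpace ℝ E]

/-- The frame obtained from `J` by the half-turn that exchanges the first vector of `J` and the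
tangent `T s`. -/
noncomputable def normalFrame (J : WithLp 2 (ℝ × F) ≃ₗᵢ[ℝ] E) (T : ℝ → E) (s : ℝ) :
    WithLp 2 (ℝ × F) ≃ₗᵢ[ℝ] E :=
  J.trans (halfTurn (frameEquiv J (1, 0)) (T s))

/-- The coordinates of the curvature vector `A s` in the normal part of `normalFrame J T s`. -/
noncomputable def normalCurvature (J : WithLp 2 (ℝ × F) ≃ₗᵢ[ℝ] E) (T A : ℝ → E) (s : ℝ) : F :=
  ((frameEquiv J).symm (halfTurn (frameEquiv J (1, 0)) (T s) (A s))).2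

variable {J : WithLp 2 (ℝ × F) ≃ₗᵢ[ℝ] E} {γ T A : ℝ → E} {s : ℝ}

lemma frameEquiv_normalFrame (J : WithLp 2 (ℝ × F) ≃ₗᵢ[ℝ] E) (T : ℝ → E) (s : ℝ) (v : ℝ × F) :
    frameEquiv (normalFrame J T s) v =
      halfTurn (frameEquiv J (1, 0)) (T s) (frameEquiv J v) := rfl

lemma norm_frameEquiv_one (J : WithLp 2 (ℝ × F) ≃ₗᵢ[ℝ] E) : ‖frameEquiv J (1, 0)‖ = 1 := by
  rw [norm_frameEquiv_inl, abs_one]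

lemma frameEquiv_normalFrame_one (hT : ‖T s‖ = 1) (hne : frameEquiv J (1, 0) + T s ≠ 0) :
    frameEquiv (normalFrame J T s) (1, 0) = T s :=
  halfTurn_apply_self (norm_frameEquiv_one J) hT hne

lemma frameEquiv_normalCurvature (hT : ‖T s‖ = 1) (hne : frameEquiv J (1, 0) + T s ≠ 0)
    (hA : ⟪T s, A s⟫_ℝ = 0) :
    frameEquiv (normalFrame J T s) (0, normalCurvature J T A s) = A s := by
  have hsymm : normalCurvature J T A s = ((frameEquiv (normalFrame J T s)).symm (A s)).2 := by
    rw [normalCurvature]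
    nth_rw 1 [← halfTurn_symm]
    rfl
  rw [hsymm]
  exact frameEquiv_symm_snd (by rwa [frameEquiv_normalFrame_one hT hne])

lemma norm_normalCurvature (hT : ‖T s‖ = 1) (hne : frameEquiv J (1, 0) + T s ≠ 0)
    (hA : ⟪T s, A s⟫_ℝ = 0) : ‖normalCurvature J T A s‖ = ‖A s‖ := by
  rw [← norm_frameEquiv_inr (normalFrame J T s), frameEquiv_normalCurvature hT hne hA]

lemma exists_hasDerivAt_normalFrame (hT : DifferentiableAt ℝ T s)
    (hne : frameEquiv J (1, 0) + T s ≠ 0) :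
    ∃ Q', HasDerivAt (fun s => (frameEquiv (normalFrame J T s) : ℝ × F →L[ℝ] E)) Q' s := by
  obtain ⟨R', hR'⟩ := exists_hasDerivAt_halfTurn _ hT hne
  have hcomp : (fun s => (frameEquiv (normalFrame J T s) : ℝ × F →L[ℝ] E)) = fun s =>
      (halfTurn (frameEquiv J (1, 0)) (T s) : E →L[ℝ] E).comp (frameEquiv J : ℝ × F →L[ℝ] E) :=
    funext fun s => ContinuousLinearMap.ext fun v => frameEquiv_normalFrame J T s v
  rw [hcomp]
  exact ⟨_, hR'.clm_comp (hasDerivAt_const s (frameEquiv J : ℝ × F →L[ℝ] E))⟩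

lemma differentiableAt_normalCurvature (hT : DifferentiableAt ℝ T s)
    (hA : DifferentiableAt ℝ A s) (hne : frameEquiv J (1, 0) + T s ≠ 0) :
    DifferentiableAt ℝ (normalCurvature J T A) s := by
  obtain ⟨R', hR'⟩ := exists_hasDerivAt_halfTurn _ hT hne
  exact ((frameEquiv J).symm.differentiableAt.comp s
    (hR'.clm_apply hA.hasDerivAt).differentiableAt).snd

lemma inner_eq_zero_of_hasDerivAt_of_norm_eq_one (hT : HasDerivAt T (A s) s)
    (hunit : ∀ s, ‖T s‖ = 1) : ⟪T s, A s⟫_ℝ = 0 := by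
  have hderiv := hT.norm_sq
  simp only [hunit] at hderiv
  linarith [hderiv.unique (hasDerivAt_const s _)]

theorem isAdaptedFrame_normalFrame (hγ : ∀ s, HasDerivAt γ (T s) s)
    (hT : ∀ s, HasDerivAt T (A s) s) (hA : Differentiable ℝ A) (hunit : ∀ s, ‖T s‖ = 1) {I : Set ℝ}
    (hI : IsOpen I) (hne : ∀ s ∈ I, frameEquiv J (1, 0) + T s ≠ 0) :
    IsAdaptedFrame γ (normalFrame J T) (normalCurvature J T A) I where
  hasDerivAt_curve s hs := by
    rw [frameEquiv_normalFrame_one (hunit s) (hne s hs)]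
    exact hγ s
  hasDerivAt_tangent s hs := by
    rw [frameEquiv_normalCurvature (hunit s) (hne s hs)
      (inner_eq_zero_of_hasDerivAt_of_norm_eq_one (hT s) hunit)]
    refine (hT s).congr_of_eventuallyEq ?_
    filter_upwards [hI.mem_nhds hs] with r hr
    exact frameEquiv_normalFrame_one (hunit r) (hne r hr)
  exists_hasDerivAt_frame s hs := exists_hasDerivAt_normalFrame (hT s).differentiableAt (hne s hs)
  differentiableAt_curvature s hs :=
    differentiableAt_normalCurvature (hT s).differentiableAt (hA s) (hne s hs)

lemma exists_frameEquiv_one_eq [FiniteDimensional ℝ F] [FiniteDimensional ℝ E]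
    (hdim : Module.finrank ℝ E = Module.finrank ℝ F + 1) {e : E} (he : ‖e‖ = 1) :
    ∃ J : WithLp 2 (ℝ × F) ≃ₗᵢ[ℝ] E, frameEquiv J (1, 0) = e := by
  have hrank : Module.finrank ℝ (WithLp 2 (ℝ × F)) = Module.finrank ℝ E := by
    rw [(WithLp.linearEquiv 2 ℝ (ℝ × F)).finrank_eq, Module.finrank_prod, Module.finrank_self, hdim,
      add_comm]
  let J := (stdOrthonormalBasis ℝ (WithLp 2 (ℝ × F))).equiv (stdOrthonormalBasis ℝ E)
    (finCongr hrank)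
  refine ⟨J.trans (ℝ ∙ (frameEquiv J (1, 0) - e))ᗮ.reflection, ?_⟩
  exact Submodule.reflection_sub ((norm_frameEquiv_one J).trans he.symm)

variable [FiniteDimensional ℝ F] [MeasurableSpace F] [BorelSpace F]
  [FiniteDimensional ℝ E] [MeasurableSpace E] [BorelSpace E]

lemma measurable_halfTurn_apply {X : Type*} [MeasurableSpace X] (e : E) {p x : X → E}
    (hp : Measurable p) (hx : Measurable x) : Measurable fun a => halfTurn e (p a) (x a) := by
  simp only [halfTurn_apply]
  fun_prop

lemma measurable_normalCurvature (hT : Measurable T) (hA : Measurable A) :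
    Measurable (normalCurvature J T A) :=
  measurable_snd.comp
    ((frameEquiv J).symm.continuous.measurable.comp (measurable_halfTurn_apply _ hT hA))

lemma measurable_sweep_normalFrame (hγ : Measurable γ) (hT : Measurable T) :
    Measurable (sweep γ (normalFrame J T)) :=
  (hγ.comp measurable_fst).add (measurable_halfTurn_apply _ (hT.comp measurable_fst)
    ((frameEquiv J).continuous.measurable.comp (by fun_prop)))

end NormalFrame

section Curve

variable {E : Type*} [NormedAddCommGroup E] [InnerProductSpace ℝ E]

/-- The curve `γ` has unit speed, its successive derivatives are `T`, `A`, `B`, `D`, and on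
`[-1, 1]` those of order two to four are bounded by `K`. -/
structure IsUnitSpeedCurve (γ T A B D : ℝ → E) (K : ℝ) : Prop where
  hasDerivAt_curve : ∀ s, HasDerivAt γ (T s) s
  hasDerivAt_tangent : ∀ s, HasDerivAt T (A s) s
  hasDerivAt_curvature : ∀ s, HasDerivAt A (B s) s
  hasDerivAt_jerk : ∀ s, HasDerivAt B (D s) s
  norm_tangent : ∀ s, ‖T s‖ = 1
  one_le_bound : 1 ≤ K
  norm_curvature_le : ∀ s, |s| ≤ 1 → ‖A s‖ ≤ K
  norm_jerk_le : ∀ s, |s| ≤ 1 → ‖B s‖ ≤ K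
  norm_snap_le : ∀ s, |s| ≤ 1 → ‖D s‖ ≤ K

namespace IsUnitSpeedCurve

variable {γ T A B D : ℝ → E} {K : ℝ} {a b s : ℝ}

lemma inner_tangent_curvature (h : IsUnitSpeedCurve γ T A B D K) (s : ℝ) : ⟪T s, A s⟫_ℝ = 0 :=
  inner_eq_zero_of_hasDerivAt_of_norm_eq_one (h.hasDerivAt_tangent s) h.norm_tangent

lemma inner_tangent_jerk (h : IsUnitSpeedCurve γ T A B D K) (s : ℝ) :
    ⟪T s, B s⟫_ℝ = -‖A s‖ ^ 2 := by
  have hderiv := (h.hasDerivAt_tangent s).inner ℝ (h.hasDerivAt_curvature s)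
  simp only [h.inner_tangent_curvature, real_inner_self_eq_norm_sq] at hderiv
  linarith [hderiv.unique (hasDerivAt_const s (0 : ℝ))]

lemma norm_tangent_sub_le (h : IsUnitSpeedCurve γ T A B D K) (ha : |a| ≤ 1) (hb : |b| ≤ 1) :
    ‖T b - T a‖ ≤ K * |b - a| :=
  norm_sub_le_of_hasDerivAt (t := 0) (r := 1) h.hasDerivAt_tangent
    (fun x hx => h.norm_curvature_le x (by rwa [sub_zero] at hx)) (by rwa [sub_zero])
    (by rwa [sub_zero])

lemma norm_curvature_sub_le (h : IsUnitSpeedCurve γ T A B D K) (ha : |a| ≤ 1) (hb : |b| ≤ 1) :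
    ‖A b - A a‖ ≤ K * |b - a| :=
  norm_sub_le_of_hasDerivAt (t := 0) (r := 1) h.hasDerivAt_curvature
    (fun x hx => h.norm_jerk_le x (by rwa [sub_zero] at hx)) (by rwa [sub_zero])
    (by rwa [sub_zero])

lemma norm_sub_sub_smul_le (h : IsUnitSpeedCurve γ T A B D K) (ha : |a| ≤ 1) (hb : |b| ≤ 1) :
    ‖γ b - γ a - (b - a) • T a‖ ≤ K * |b - a| ^ 2 :=
  norm_sub_sub_smul_le_of_hasDerivAt (t := 0) (r := 1) h.hasDerivAt_curve h.hasDerivAt_tangent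
    (fun x hx => h.norm_curvature_le x (by rwa [sub_zero] at hx)) (by rwa [sub_zero])
    (by rwa [sub_zero])

lemma norm_curvature_sub_sub_smul_le (h : IsUnitSpeedCurve γ T A B D K) (ha : |a| ≤ 1)
    (hb : |b| ≤ 1) : ‖A b - A a - (b - a) • B a‖ ≤ K * |b - a| ^ 2 :=
  norm_sub_sub_smul_le_of_hasDerivAt (t := 0) (r := 1) h.hasDerivAt_curvature h.hasDerivAt_jerk
    (fun x hx => h.norm_snap_le x (by rwa [sub_zero] at hx)) (by rwa [sub_zero])
    (by rwa [sub_zero])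

/- Pairing the displacement with the tangent isolates `b - a`, while the normal offset only sees the
variation of the tangent. -/
lemma eq_of_add_normal_eq (h : IsUnitSpeedCurve γ T A B D K) {σ : ℝ} (ha : |a| ≤ 1) (hb : |b| ≤ 1)
    (hK : K * (|b - a| + σ) < 1) {v w : E} (hv : ⟪T a, v⟫_ℝ = 0) (hw : ⟪T b, w⟫_ℝ = 0)
    (hwσ : ‖w‖ ≤ σ) (heq : γ a + v = γ b + w) : a = b := by
  by_contra hab
  have hpos : 0 < |b - a| := abs_pos.2 (sub_ne_zero.2 (Ne.symm hab))
  have hsplit : b - a = ⟪T a, T a⟫_ℝ * (b - a) := by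
    rw [real_inner_self_eq_norm_sq, h.norm_tangent, one_pow, one_mul]
  have hpair : b - a = ⟪T b - T a, w⟫_ℝ - ⟪T a, γ b - γ a - (b - a) • T a⟫_ℝ := by
    have hdiff : γ b - γ a = v - w := by
      rw [sub_eq_sub_iff_add_eq_add, ← heq, add_comm]
    rw [hdiff, inner_sub_right, inner_sub_right, real_inner_smul_right, inner_sub_left, hv, hw]
    linarith
  have htangent : |⟪T b - T a, w⟫_ℝ| ≤ K * |b - a| * σ :=
    (abs_real_inner_le_norm _ _).trans (mul_le_mul (h.norm_tangent_sub_le ha hb) hwσ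
      (norm_nonneg _) (by have := h.one_le_bound; positivity))
  have hchord : |⟪T a, γ b - γ a - (b - a) • T a⟫_ℝ| ≤ K * |b - a| ^ 2 := by
    refine (abs_real_inner_le_norm _ _).trans ?_
    rw [h.norm_tangent, one_mul]
    exact h.norm_sub_sub_smul_le ha hb
  have habs : |b - a| ≤ K * |b - a| * σ + K * |b - a| ^ 2 := by
    conv_lhs => rw [hpair]
    exact (abs_sub _ _).trans (add_le_add htangent hchord)
  nlinarith

lemma tangent_add_tangent_ne_zero (h : IsUnitSpeedCurve γ T A B D K) (ha : |a| ≤ 1)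
    (hb : |b| ≤ 1) (hK : K * |b - a| < 2) : T a + T b ≠ 0 := by
  intro hsum
  have hdiff : T b - T a = (2 : ℝ) • T b := by
    rw [eq_neg_of_add_eq_zero_left hsum, sub_neg_eq_add, two_smul]
  have hle := h.norm_tangent_sub_le ha hb
  rw [hdiff, norm_smul, h.norm_tangent, Real.norm_two, mul_one] at hle
  linarith

end IsUnitSpeedCurve

end Curve

section NormalTube

variable {F E : Type*} [NormedAddCommGroup F] [InnerProductSpace ℝ F]
  [NormedAddCommGroup E] [InnerProductSpace ℝ E]

/-- The tube segment around `γ t` of radius `σ` and half-length `ε`: the union of the open discs of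
radius `σ` normal to `γ` at arclength distance less than `ε`. -/
def normalTube (γ : ℝ → E) (t σ ε : ℝ) : Set E :=
  {x | ∃ s ∈ Ioo (t - ε) (t + ε), ∃ w, ⟪deriv γ s, w⟫_ℝ = 0 ∧ ‖w‖ < σ ∧ γ s + w = x}

/-- The parametrization of tubes around `γ` by cylinders that transports normalized volume: the
sweep along the half-turn frame, with the slices unflattened. -/
noncomputable def tubeMap (σ : ℝ) (γ T A : ℝ → E) (J : WithLp 2 (ℝ × F) ≃ₗᵢ[ℝ] E) : ℝ × F → E :=
  sweep γ (normalFrame J T) ∘ unflattenMap σ (normalCurvature J T A)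

variable {γ T A B D : ℝ → E} {K δ t σ ε : ℝ} {J : WithLp 2 (ℝ × F) ≃ₗᵢ[ℝ] E}

lemma tubeMap_apply {p : ℝ × F} (hA : frameEquiv (normalFrame J T p.1)
      (0, normalCurvature J T A p.1) = A p.1) :
    tubeMap σ γ T A J p = γ p.1 + frameEquiv (normalFrame J T p.1) (0, p.2) -
      flattenShift σ (normalCurvature J T A p.1) p.2 • A p.1 := by
  have hsplit : ((0 : ℝ), p.2 - flattenShift σ (normalCurvature J T A p.1) p.2 •
      normalCurvature J T A p.1) = (0, p.2) - flattenShift σ (normalCurvature J T A p.1) p.2 •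
        (0, normalCurvature J T A p.1) := by simp
  simp only [tubeMap, Function.comp_apply, sweep, unflattenMap]
  rw [hsplit, map_sub, map_smul, hA, add_sub_assoc]

lemma sweep_image_solidCylinder {Q : ℝ → WithLp 2 (ℝ × F) ≃ₗᵢ[ℝ] E}
    (hQ : ∀ s ∈ Ioo (-ε) ε, frameEquiv (Q s) (1, 0) = deriv γ (t + s)) :
    sweep (fun s => γ (t + s)) Q '' solidCylinder F σ ε = normalTube γ t σ ε := by
  ext x
  constructor
  · rintro ⟨⟨s, y⟩, ⟨hs, hy⟩, rfl⟩
    refine ⟨t + s, ⟨by linarith [hs.1], by linarith [hs.2]⟩, frameEquiv (Q s) (0, y), ?_, ?_, rfl⟩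
    · rw [← hQ s hs, inner_frameEquiv, mul_zero, inner_zero_left, add_zero]
    · rwa [norm_frameEquiv_inr, ← mem_ball_zero_iff]
  · rintro ⟨r, hr, w, hperp, hw, rfl⟩
    have hs : r - t ∈ Ioo (-ε) ε := ⟨by linarith [hr.1], by linarith [hr.2]⟩
    have hrep := frameEquiv_symm_snd (q := Q (r - t)) (w := w)
      (by rwa [hQ _ hs, add_sub_cancel])
    refine ⟨(r - t, ((frameEquiv (Q (r - t))).symm w).2), ⟨hs, ?_⟩, ?_⟩
    · rwa [mem_ball_zero_iff, ← norm_frameEquiv_inr (Q (r - t)), hrep]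
    · simp only [sweep, add_sub_cancel, hrep]

namespace IsUnitSpeedCurve

lemma deriv_eq (h : IsUnitSpeedCurve γ T A B D K) : deriv γ = T :=
  funext fun s => (h.hasDerivAt_curve s).deriv

lemma abs_le_one (h : IsUnitSpeedCurve γ T A B D K) {s : ℝ} (hs : K * |s| ≤ 1 / 32) : |s| ≤ 1 := by
  nlinarith [h.one_le_bound, abs_nonneg s]

lemma base_add_tangent_ne_zero (h : IsUnitSpeedCurve γ T A B D K) (hJ : frameEquiv J (1, 0) = T 0)
    {s : ℝ} (hs : K * |s| ≤ 1 / 32) : frameEquiv J (1, 0) + T s ≠ 0 := by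
  rw [hJ]
  exact h.tangent_add_tangent_ne_zero (by simp) (h.abs_le_one hs) (by rw [sub_zero]; linarith)

lemma norm_normalCurvature_le (h : IsUnitSpeedCurve γ T A B D K)
    (hJ : frameEquiv J (1, 0) = T 0) {s : ℝ} (hs : K * |s| ≤ 1 / 32) :
    ‖normalCurvature J T A s‖ ≤ K := by
  rw [norm_normalCurvature (h.norm_tangent s) (h.base_add_tangent_ne_zero hJ hs)
    (h.inner_tangent_curvature s)]
  exact h.norm_curvature_le s (h.abs_le_one hs)

lemma injOn_sweep (h : IsUnitSpeedCurve γ T A B D K) {Q : ℝ → WithLp 2 (ℝ × F) ≃ₗᵢ[ℝ] E}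
    (hQ : ∀ s ∈ Ioo (-ε) ε, frameEquiv (Q s) (1, 0) = T (t + s)) (ht : |t| + ε ≤ 1)
    (hK : K * (2 * ε + σ) < 1) : InjOn (sweep (fun s => γ (t + s)) Q) (solidCylinder F σ ε) := by
  rintro ⟨a, v⟩ ha ⟨b, w⟩ hb heq
  rw [mem_solidCylinder] at ha hb
  have hab : a = b := by
    have hdist : |t + b - (t + a)| ≤ 2 * ε := by
      rw [add_sub_add_left_eq_sub]
      exact (abs_sub _ _).trans (by linarith [ha.1, hb.1])
    have hbase := h.eq_of_add_normal_eq (a := t + a) (b := t + b) (σ := σ)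
      (v := frameEquiv (Q a) (0, v)) (w := frameEquiv (Q b) (0, w))
      ((abs_add_le _ _).trans (by linarith [ha.1])) ((abs_add_le _ _).trans (by linarith [hb.1]))
      (lt_of_le_of_lt (mul_le_mul_of_nonneg_left (by linarith)
        (zero_le_one.trans h.one_le_bound)) hK)
      (by rw [← hQ a (abs_lt.1 ha.1)]; simp [inner_frameEquiv])
      (by rw [← hQ b (abs_lt.1 hb.1)]; simp [inner_frameEquiv])
      (by rw [norm_frameEquiv_inr]; exact hb.2.le) heq
    linarith
  subst hab
  exact Prod.ext rfl (Prod.ext_iff.1 ((frameEquiv (Q a)).injective (add_left_cancel heq))).2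

variable [FiniteDimensional ℝ F] [MeasurableSpace F] [BorelSpace F]
  [FiniteDimensional ℝ E] [MeasurableSpace E] [BorelSpace E]

theorem normRestrict_normalTube (h : IsUnitSpeedCurve γ T A B D K)
    (hJ : frameEquiv J (1, 0) = T 0) (hδ : K * δ ≤ 1 / 64) (ht : |t| ≤ δ) (hσ : σ ≤ δ / 4)
    (hε : ε ≤ δ / 4) :
    normRestrict (normalTube γ t σ ε) =
      (normRestrict (solidCylinder F σ ε)).map fun p => tubeMap σ γ T A J (t + p.1, p.2) := by
  have hK := h.one_le_bound
  have hδ0 : 0 ≤ δ := (abs_nonneg t).trans ht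
  have hδ1 : δ ≤ 1 / 64 := by nlinarith
  have hI : ∀ s ∈ Ioo (-ε) ε, K * |t + s| ≤ 1 / 32 := fun s hs => by
    nlinarith [(abs_add_le t s).trans (add_le_add ht (abs_lt.2 hs).le)]
  have hne : ∀ s ∈ Ioo (-ε) ε, frameEquiv J (1, 0) + T (t + s) ≠ 0 := fun s hs =>
    h.base_add_tangent_ne_zero hJ (hI s hs)
  have htangent : ∀ s ∈ Ioo (-ε) ε,
      frameEquiv (normalFrame J (fun s => T (t + s)) s) (1, 0) = T (t + s) := fun s hs =>
    frameEquiv_normalFrame_one (h.norm_tangent _) (hne s hs)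
  have hκ : ∀ s ∈ Ioo (-ε) ε, ‖normalCurvature J T A (t + s)‖ * σ < 1 := fun s hs => by
    nlinarith [norm_nonneg (normalCurvature J T A (t + s)), h.norm_normalCurvature_le hJ (hI s hs)]
  have hcont : ∀ {f f' : ℝ → E}, (∀ s, HasDerivAt f (f' s) s) → Measurable fun s => f (t + s) :=
    fun hf => (continuous_iff_continuousAt.2 fun s =>
      (hasDerivAt_comp_add hf t s).continuousAt).measurable
  have hframe := isAdaptedFrame_normalFrame (hasDerivAt_comp_add h.hasDerivAt_curve t)
    (hasDerivAt_comp_add h.hasDerivAt_tangent t)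
    (fun s => (hasDerivAt_comp_add h.hasDerivAt_curvature t s).differentiableAt)
    (fun s => h.norm_tangent (t + s)) isOpen_Ioo hne
  rw [← sweep_image_solidCylinder (F := F) fun s hs => by rw [htangent s hs, h.deriv_eq]]
  change _ = Measure.map (sweep (fun s => γ (t + s)) (normalFrame J fun s => T (t + s)) ∘
    unflattenMap σ (normalCurvature J (fun s => T (t + s)) fun s => A (t + s))) _
  exact normRestrict_image_sweep hframe hκ (h.injOn_sweep htangent (by linarith) (by nlinarith))
    (measurable_sweep_normalFrame (hcont h.hasDerivAt_curve) (hcont h.hasDerivAt_tangent))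
    (measurable_normalCurvature (hcont h.hasDerivAt_tangent) (hcont h.hasDerivAt_curvature))

end IsUnitSpeedCurve

end NormalTube

section Transport

variable {F E : Type*} [NormedAddCommGroup F] [InnerProductSpace ℝ F]
  [NormedAddCommGroup E] [InnerProductSpace ℝ E]
  {γ T A B D : ℝ → E} {K a b δ s t σ : ℝ} {J : WithLp 2 (ℝ × F) ≃ₗᵢ[ℝ] E} {y : F}

/-- The coefficient by which `normalFrame J T s` tilts the normal vector `y` towards the bisector of
the base direction and the tangent. -/
noncomputable def frameTilt (J : WithLp 2 (ℝ × F) ≃ₗᵢ[ℝ] E) (T : ℝ → E) (s : ℝ) (y : F) : ℝ :=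
  ⟪T s, frameEquiv J (0, y)⟫_ℝ / (1 + ⟪frameEquiv J (1, 0), T s⟫_ℝ)

lemma frameEquiv_normalFrame_inr (hT : ‖T s‖ = 1) :
    frameEquiv (normalFrame J T s) (0, y) =
      frameTilt J T s y • (frameEquiv J (1, 0) + T s) - frameEquiv J (0, y) := by
  rw [frameEquiv_normalFrame, halfTurn_apply_eq (norm_frameEquiv_one J) hT, inner_add_left,
    inner_frameEquiv, mul_zero, inner_zero_left, zero_add, zero_add, frameTilt]

namespace IsUnitSpeedCurve

lemma abs_frameTilt_le (h : IsUnitSpeedCurve γ T A B D K) (hJ : frameEquiv J (1, 0) = T 0)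
    (hs : K * |s| ≤ 1 / 32) : |frameTilt J T s y| ≤ K * |s| * ‖y‖ := by
  have hvar : ‖T s - frameEquiv J (1, 0)‖ ≤ K * |s| := by
    simpa [hJ] using h.norm_tangent_sub_le (a := 0) (by simp) (h.abs_le_one hs)
  have hnum : |⟪T s, frameEquiv J (0, y)⟫_ℝ| ≤ K * |s| * ‖y‖ := by
    have hinner : ⟪T s, frameEquiv J (0, y)⟫_ℝ =
        ⟪T s - frameEquiv J (1, 0), frameEquiv J (0, y)⟫_ℝ := by
      simp [inner_sub_left, inner_frameEquiv]
    rw [hinner, ← norm_frameEquiv_inr J y]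
    exact (abs_real_inner_le_norm _ _).trans
      (mul_le_mul_of_nonneg_right hvar (norm_nonneg _))
  have hden : 1 ≤ 1 + ⟪frameEquiv J (1, 0), T s⟫_ℝ := by
    have hsq := norm_sub_sq_real (T s) (frameEquiv J (1, 0))
    rw [h.norm_tangent, norm_frameEquiv_one, real_inner_comm] at hsq
    nlinarith [norm_nonneg (T s - frameEquiv J (1, 0))]
  rw [frameTilt, abs_div, abs_of_pos (zero_lt_one.trans_le hden)]
  exact (div_le_self (abs_nonneg _) hden).trans hnum

lemma norm_base_add_tangent_sub_le (h : IsUnitSpeedCurve γ T A B D K)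
    (hJ : frameEquiv J (1, 0) = T 0) (hs : |s| ≤ 1) (ht : |t| ≤ 1) :
    ‖frameEquiv J (1, 0) + T s - (2 : ℝ) • T t‖ ≤ K * (|t| + |s - t|) := by
  have hsplit : frameEquiv J (1, 0) + T s - (2 : ℝ) • T t = T 0 - T t + (T s - T t) := by
    rw [hJ, two_smul]
    abel
  rw [hsplit, mul_add]
  refine (norm_add_le _ _).trans (add_le_add ?_ (h.norm_tangent_sub_le ht hs))
  simpa using h.norm_tangent_sub_le ht (b := 0) (by simp)

/- The half-turn frames at `a` and `b` differ only along the bisectors, hence nearly along the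
tangent at the midpoint. -/
lemma norm_normalFrame_sub_le (h : IsUnitSpeedCurve γ T A B D K) (hJ : frameEquiv J (1, 0) = T 0)
    (hδ : K * δ ≤ 1 / 64) (ha : |a| ≤ 5 / 4 * δ) (hb : |b| ≤ 5 / 4 * δ)
    (ha' : |a - δ / 2| ≤ 3 / 4 * δ) (hb' : |b - δ / 2| ≤ 3 / 4 * δ) (hy : ‖y‖ ≤ δ / 4) :
    ‖frameEquiv (normalFrame J T b) (0, y) - frameEquiv (normalFrame J T a) (0, y) -
      (2 * (frameTilt J T b y - frameTilt J T a y)) • T (δ / 2)‖ ≤ K ^ 2 * δ ^ 3 := by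
  have hK := h.one_le_bound
  have hδ0 : 0 ≤ δ := by linarith [norm_nonneg y]
  have hpart : ∀ s, |s| ≤ 5 / 4 * δ → |s - δ / 2| ≤ 3 / 4 * δ →
      ‖frameTilt J T s y • (frameEquiv J (1, 0) + T s - (2 : ℝ) • T (δ / 2))‖ ≤
        K ^ 2 * δ ^ 3 / 2 := fun s hs hs' => by
    have hs32 : K * |s| ≤ 1 / 32 := by nlinarith
    have htilt : |frameTilt J T s y| ≤ 5 / 16 * K * δ ^ 2 :=
      (h.abs_frameTilt_le hJ hs32).trans
        (by nlinarith [mul_le_mul hs hy (norm_nonneg _) (by positivity)])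
    have hvec := h.norm_base_add_tangent_sub_le hJ (h.abs_le_one hs32) (t := δ / 2)
      (by rw [abs_of_nonneg (by linarith)]; nlinarith)
    rw [abs_of_nonneg (by linarith : 0 ≤ δ / 2)] at hvec
    rw [norm_smul, Real.norm_eq_abs]
    calc _ ≤ (5 / 16 * K * δ ^ 2) * (K * (5 / 4 * δ)) :=
          mul_le_mul htilt (hvec.trans (by gcongr; linarith)) (norm_nonneg _) (by positivity)
      _ ≤ K ^ 2 * δ ^ 3 / 2 := by nlinarith [show 0 ≤ K ^ 2 * δ ^ 3 by positivity]
  have hsplit : frameEquiv (normalFrame J T b) (0, y) - frameEquiv (normalFrame J T a) (0, y) -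
      (2 * (frameTilt J T b y - frameTilt J T a y)) • T (δ / 2) =
      frameTilt J T b y • (frameEquiv J (1, 0) + T b - (2 : ℝ) • T (δ / 2)) -
        frameTilt J T a y • (frameEquiv J (1, 0) + T a - (2 : ℝ) • T (δ / 2)) := by
    rw [frameEquiv_normalFrame_inr (h.norm_tangent a),
      frameEquiv_normalFrame_inr (h.norm_tangent b)]
    module
  rw [hsplit]
  exact (norm_sub_le _ _).trans (by linarith [hpart a ha ha', hpart b hb hb'])

lemma norm_flattenShift_smul_sub_le (h : IsUnitSpeedCurve γ T A B D K)
    (hJ : frameEquiv J (1, 0) = T 0) (ha : K * |a| ≤ 1 / 32) (hb : K * |b| ≤ 1 / 32)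
    (hσ : K * σ ≤ 1 / 32) (hy : ‖y‖ < σ) :
    ‖flattenShift σ (normalCurvature J T A b) y • A b -
      flattenShift σ (normalCurvature J T A a) y • A a‖ ≤
        σ ^ 2 / 2 * (K * |b - a|) + K ^ 2 * σ ^ 3 := by
  have hσ0 : 0 ≤ σ := (norm_nonneg y).trans hy.le
  have hκ : ∀ s, K * |s| ≤ 1 / 32 → ‖normalCurvature J T A s‖ * σ < 1 := fun s hs => by
    nlinarith [h.norm_normalCurvature_le hJ hs]
  have hshift : ∀ s, K * |s| ≤ 1 / 32 →
      |flattenShift σ (normalCurvature J T A s) y - (σ ^ 2 - ‖y‖ ^ 2) / 2| ≤ K * σ ^ 3 / 2 :=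
    fun s hs => (abs_flattenShift_sub_le (hκ s hs) hy).trans
      (by have := h.norm_normalCurvature_le hJ hs; gcongr)
  have hsplit : flattenShift σ (normalCurvature J T A b) y • A b -
      flattenShift σ (normalCurvature J T A a) y • A a =
      flattenShift σ (normalCurvature J T A b) y • (A b - A a) +
        (flattenShift σ (normalCurvature J T A b) y -
          flattenShift σ (normalCurvature J T A a) y) • A a := by
    module
  rw [hsplit]
  refine (norm_add_le _ _).trans (add_le_add ?_ ?_)
  · rw [norm_smul, Real.norm_eq_abs, abs_of_pos (flattenShift_pos (hκ b hb) hy)]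
    exact mul_le_mul (flattenShift_le (hκ b hb) hy)
      (h.norm_curvature_sub_le (h.abs_le_one ha) (h.abs_le_one hb)) (norm_nonneg _) (by positivity)
  · rw [norm_smul, Real.norm_eq_abs, show K ^ 2 * σ ^ 3 = K * σ ^ 3 * K by ring]
    refine mul_le_mul ?_ (h.norm_curvature_le a (h.abs_le_one ha)) (norm_nonneg _)
      (by have := h.one_le_bound; positivity)
    have := abs_sub_le (flattenShift σ (normalCurvature J T A b) y) ((σ ^ 2 - ‖y‖ ^ 2) / 2)
      (flattenShift σ (normalCurvature J T A a) y)
    rw [abs_sub_comm ((σ ^ 2 - ‖y‖ ^ 2) / 2)] at this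
    linarith [hshift a ha, hshift b hb]

lemma norm_flattenShift_smul_reflect_sub_le (h : IsUnitSpeedCurve γ T A B D K)
    (hJ : frameEquiv J (1, 0) = T 0) (hδ : K * δ ≤ 1 / 64) (hσ : σ ≤ δ / 4) (hs : |s| ≤ δ / 4)
    (hy : ‖y‖ < σ) :
    ‖flattenShift σ (normalCurvature J T A (δ - s)) y • A (δ - s) -
      flattenShift σ (normalCurvature J T A s) y • A s‖ ≤ K ^ 2 * δ ^ 3 / 8 := by
  have hK := h.one_le_bound
  have hσ0 : 0 < σ := (norm_nonneg y).trans_lt hy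
  have hs' := abs_le.1 hs
  have hreflect : |δ - s| ≤ 5 / 4 * δ := abs_le.2 ⟨by linarith, by linarith⟩
  have hdist : |δ - s - s| ≤ 3 / 2 * δ := abs_le.2 ⟨by linarith, by linarith⟩
  have hδ0 : 0 < δ := by linarith
  have hle : K * δ ^ 3 ≤ K ^ 2 * δ ^ 3 := by
    gcongr
    exact le_self_pow₀ hK two_ne_zero
  calc _ ≤ σ ^ 2 / 2 * (K * |δ - s - s|) + K ^ 2 * σ ^ 3 :=
        h.norm_flattenShift_smul_sub_le hJ (by nlinarith) (by nlinarith) (by nlinarith) hy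
    _ ≤ (δ / 4) ^ 2 / 2 * (K * (3 / 2 * δ)) + K ^ 2 * (δ / 4) ^ 3 := by gcongr
    _ ≤ K ^ 2 * δ ^ 3 / 8 := by linarith [show 0 ≤ K ^ 2 * δ ^ 3 by positivity]

lemma norm_curve_sub_sub_smul_tangent_le (h : IsUnitSpeedCurve γ T A B D K)
    (hδ : K * δ ≤ 1 / 64) (hs : |δ / 2 - s| ≤ 3 / 4 * δ) :
    ‖γ (δ - s) - γ s - (2 * (δ / 2 - s)) • T (δ / 2)‖ ≤ 27 / 32 * K * δ ^ 3 := by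
  have hK := h.one_le_bound
  have hδ0 : 0 ≤ δ := by linarith [abs_nonneg (δ / 2 - s)]
  have hchord := norm_add_sub_sub_smul_le (by linarith) h.hasDerivAt_curve h.hasDerivAt_tangent
    h.hasDerivAt_curvature (t := δ / 2) (s := δ / 2 - s) (r := 3 / 4 * δ) (K := K)
    (fun x hx => h.norm_jerk_le x ?_) hs
  · rw [show δ / 2 + (δ / 2 - s) = δ - s by ring, show δ / 2 - (δ / 2 - s) = s by ring] at hchord
    refine hchord.trans ?_
    calc 2 * K * |δ / 2 - s| ^ 3 ≤ 2 * K * (3 / 4 * δ) ^ 3 := by gcongr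
      _ = 27 / 32 * K * δ ^ 3 := by ring
  · rw [abs_le] at hx ⊢
    constructor <;> nlinarith

end IsUnitSpeedCurve

end Transport

section CylinderMeasure

variable {F : Type*} [NormedAddCommGroup F] [InnerProductSpace ℝ F] [FiniteDimensional ℝ F]
  [MeasurableSpace F] [BorelSpace F] {σ ε : ℝ}

lemma isProbabilityMeasure_normRestrict_Ioo (hε : 0 < ε) :
    IsProbabilityMeasure (normRestrict (Ioo (-ε) ε)) :=
  isProbabilityMeasure_normRestrict (by simpa using hε) measure_Ioo_lt_top.ne

lemma isProbabilityMeasure_normRestrict_ball (hσ : 0 < σ) :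
    IsProbabilityMeasure (normRestrict (Metric.ball (0 : F) σ)) :=
  isProbabilityMeasure_normRestrict (Metric.measure_ball_pos _ _ hσ).ne' measure_ball_lt_top.ne

lemma normRestrict_solidCylinder (hε : 0 < ε) : normRestrict (solidCylinder F σ ε) =
    (normRestrict (Ioo (-ε) ε)).prod (normRestrict (Metric.ball (0 : F) σ)) :=
  normRestrict_prod (by simpa using hε) measure_Ioo_lt_top.ne

lemma isProbabilityMeasure_normRestrict_solidCylinder (hσ : 0 < σ) (hε : 0 < ε) :
    IsProbabilityMeasure (normRestrict (solidCylinder F σ ε)) := by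
  have := isProbabilityMeasure_normRestrict_Ioo hε
  have := isProbabilityMeasure_normRestrict_ball (F := F) hσ
  rw [normRestrict_solidCylinder hε]
  infer_instance

lemma ae_mem_normRestrict_solidCylinder :
    ∀ᵐ p ∂normRestrict (solidCylinder F σ ε), |p.1| < ε ∧ ‖p.2‖ < σ := by
  filter_upwards [ae_mem_normRestrict (measurableSet_Ioo.prod measurableSet_ball)] with p hp
  exact mem_solidCylinder.1 hp

lemma measurePreserving_neg_fst_solidCylinder (hσ : 0 < σ) (hε : 0 < ε) :
    MeasurePreserving (fun p : ℝ × F => (-p.1, p.2)) (normRestrict (solidCylinder F σ ε))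
      (normRestrict (solidCylinder F σ ε)) := by
  have := isProbabilityMeasure_normRestrict_Ioo hε
  have := isProbabilityMeasure_normRestrict_ball (F := F) hσ
  rw [normRestrict_solidCylinder hε]
  exact (measurePreserving_neg_normRestrict (by simp)).prod (.id _)

lemma measurePreserving_neg_snd_solidCylinder (hσ : 0 < σ) (hε : 0 < ε) :
    MeasurePreserving (fun p : ℝ × F => (p.1, -p.2)) (normRestrict (solidCylinder F σ ε))
      (normRestrict (solidCylinder F σ ε)) := by
  have := isProbabilityMeasure_normRestrict_Ioo hε
  have := isProbabilityMeasure_normRestrict_ball (F := F) hσ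
  rw [normRestrict_solidCylinder hε]
  exact (MeasurePreserving.id _).prod (measurePreserving_neg_normRestrict (by simp))

lemma integrable_fst_sq_normRestrict_solidCylinder (hσ : 0 < σ) (hε : 0 < ε) :
    Integrable (fun p => p.1 ^ 2) (normRestrict (solidCylinder F σ ε)) := by
  have := isProbabilityMeasure_normRestrict_solidCylinder (F := F) hσ hε
  refine .of_bound (by fun_prop) (ε ^ 2) ?_
  filter_upwards [ae_mem_normRestrict_solidCylinder] with p ⟨hs, _⟩
  rw [Real.norm_of_nonneg (sq_nonneg _), ← sq_abs]
  gcongr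

lemma integrable_norm_snd_sq_normRestrict_solidCylinder (hσ : 0 < σ) (hε : 0 < ε) :
    Integrable (fun p => ‖p.2‖ ^ 2) (normRestrict (solidCylinder F σ ε)) := by
  have := isProbabilityMeasure_normRestrict_solidCylinder (F := F) hσ hε
  refine .of_bound (by fun_prop) (σ ^ 2) ?_
  filter_upwards [ae_mem_normRestrict_solidCylinder] with p ⟨_, hy⟩
  rw [Real.norm_of_nonneg (sq_nonneg _)]
  gcongr

lemma integral_fst_sq_normRestrict_solidCylinder (hσ : 0 < σ) (hε : 0 < ε) :
    ∫ p, p.1 ^ 2 ∂normRestrict (solidCylinder F σ ε) = ε ^ 2 / 3 := by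
  have := isProbabilityMeasure_normRestrict_Ioo hε
  have := isProbabilityMeasure_normRestrict_ball (F := F) hσ
  rw [normRestrict_solidCylinder hε, integral_fun_fst (fun s : ℝ => s ^ 2), probReal_univ, one_smul,
    integral_sq_normRestrict_Ioo hε]

lemma integral_norm_snd_sq_normRestrict_solidCylinder (hσ : 0 < σ) (hε : 0 < ε) :
    ∫ p, ‖p.2‖ ^ 2 ∂normRestrict (solidCylinder F σ ε) =
      Module.finrank ℝ F / (Module.finrank ℝ F + 2) * σ ^ 2 := by
  have := isProbabilityMeasure_normRestrict_Ioo hε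
  have := isProbabilityMeasure_normRestrict_ball (F := F) hσ
  rw [normRestrict_solidCylinder hε, integral_fun_snd (fun y : F => ‖y‖ ^ 2), probReal_univ,
    one_smul, integral_norm_sq_normRestrict_ball hσ]

lemma integrable_sq_sub_sq_normRestrict_solidCylinder (hσ : 0 < σ) (hε : 0 < ε) :
    Integrable (fun p => p.1 ^ 2 / 2 - (σ ^ 2 - ‖p.2‖ ^ 2) / 2)
      (normRestrict (solidCylinder F σ ε)) := by
  have := isProbabilityMeasure_normRestrict_solidCylinder (F := F) hσ hε
  exact ((integrable_fst_sq_normRestrict_solidCylinder hσ hε).div_const 2).sub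
    (((integrable_const _).sub
      (integrable_norm_snd_sq_normRestrict_solidCylinder hσ hε)).div_const 2)

lemma integral_sq_sub_sq_normRestrict_solidCylinder (hσ : 0 < σ) (hε : 0 < ε) :
    ∫ p, (p.1 ^ 2 / 2 - (σ ^ 2 - ‖p.2‖ ^ 2) / 2) ∂normRestrict (solidCylinder F σ ε) =
      ε ^ 2 / 6 - σ ^ 2 / (Module.finrank ℝ F + 2) := by
  have := isProbabilityMeasure_normRestrict_solidCylinder (F := F) hσ hε
  have hs := integrable_fst_sq_normRestrict_solidCylinder (F := F) hσ hε
  have hy := integrable_norm_snd_sq_normRestrict_solidCylinder (F := F) hσ hε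
  have hgap :
      Integrable (fun p : ℝ × F => σ ^ 2 - ‖p.2‖ ^ 2) (normRestrict (solidCylinder F σ ε)) :=
    (integrable_const _).sub hy
  rw [integral_sub (hs.div_const 2) (hgap.div_const 2), integral_div, integral_div,
    integral_fst_sq_normRestrict_solidCylinder hσ hε, integral_sub (integrable_const _) hy,
    integral_const, probReal_univ, one_smul, integral_norm_snd_sq_normRestrict_solidCylinder hσ hε]
  field_simp
  ring

end CylinderMeasure

section Displacement

variable {F E : Type*} [NormedAddCommGroup F] [InnerProductSpace ℝ F]
  [NormedAddCommGroup E] [InnerProductSpace ℝ E]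
  {γ T A B D : ℝ → E} {K δ s σ : ℝ} {J : WithLp 2 (ℝ × F) ≃ₗᵢ[ℝ] E} {y : F}

namespace IsUnitSpeedCurve

lemma tubeMap_eq (h : IsUnitSpeedCurve γ T A B D K) (hJ : frameEquiv J (1, 0) = T 0)
    (hs : K * |s| ≤ 1 / 32) : tubeMap σ γ T A J (s, y) =
      γ s + frameEquiv (normalFrame J T s) (0, y) -
        flattenShift σ (normalCurvature J T A s) y • A s :=
  tubeMap_apply (frameEquiv_normalCurvature (h.norm_tangent s) (h.base_add_tangent_ne_zero hJ hs)
    (h.inner_tangent_curvature s))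

lemma norm_tubeMap_sub_sub_smul_le (h : IsUnitSpeedCurve γ T A B D K)
    (hJ : frameEquiv J (1, 0) = T 0) (hδ : K * δ ≤ 1 / 64) (hσ : σ ≤ δ / 4) (hs : |s| ≤ δ / 4)
    (hy : ‖y‖ < σ) :
    ‖tubeMap σ γ T A J (δ - s, y) - tubeMap σ γ T A J (s, y) -
      (2 * (δ / 2 - s) + 2 * (frameTilt J T (δ - s) y - frameTilt J T s y)) • T (δ / 2)‖ ≤
        2 * K ^ 2 * δ ^ 3 := by
  have hK := h.one_le_bound
  have hσ0 : 0 < σ := (norm_nonneg y).trans_lt hy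
  have hδ0 : 0 < δ := by linarith
  have ha : |s| ≤ 5 / 4 * δ := by linarith
  have hs' := abs_le.1 hs
  have hb : |δ - s| ≤ 5 / 4 * δ := abs_le.2 ⟨by linarith, by linarith⟩
  have ha' : |s - δ / 2| ≤ 3 / 4 * δ := abs_le.2 ⟨by linarith, by linarith⟩
  have hb' : |δ - s - δ / 2| ≤ 3 / 4 * δ := abs_le.2 ⟨by linarith, by linarith⟩
  have hKa : K * |s| ≤ 1 / 32 := by nlinarith
  have hKb : K * |δ - s| ≤ 1 / 32 := by nlinarith
  have hcurve := h.norm_curve_sub_sub_smul_tangent_le hδ (s := s) (by rwa [abs_sub_comm])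
  have hframe := h.norm_normalFrame_sub_le hJ hδ ha hb ha' hb' (hy.le.trans hσ)
  have hshift := h.norm_flattenShift_smul_reflect_sub_le hJ hδ hσ hs hy
  have hle : K * δ ^ 3 ≤ K ^ 2 * δ ^ 3 := by
    gcongr
    exact le_self_pow₀ hK two_ne_zero
  rw [h.tubeMap_eq hJ hKa, h.tubeMap_eq hJ hKb]
  calc _ = ‖(γ (δ - s) - γ s - (2 * (δ / 2 - s)) • T (δ / 2)) +
        (frameEquiv (normalFrame J T (δ - s)) (0, y) - frameEquiv (normalFrame J T s) (0, y) -
          (2 * (frameTilt J T (δ - s) y - frameTilt J T s y)) • T (δ / 2)) -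
        (flattenShift σ (normalCurvature J T A (δ - s)) y • A (δ - s) -
          flattenShift σ (normalCurvature J T A s) y • A s)‖ := by congr 1; module
    _ ≤ 27 / 32 * K * δ ^ 3 + K ^ 2 * δ ^ 3 + K ^ 2 * δ ^ 3 / 8 :=
        (norm_sub_le _ _).trans
          (add_le_add ((norm_add_le _ _).trans (add_le_add hcurve hframe)) hshift)
    _ ≤ 2 * K ^ 2 * δ ^ 3 := by linarith [show 0 ≤ K ^ 2 * δ ^ 3 by positivity]

/- Every displacement of the coupling is `O(δ³)`-close to the direction `T (δ / 2)`, so by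
Pythagoras its length exceeds its component along `T (δ / 2)` only by `O(δ⁵)`. -/
lemma norm_tubeMap_sub_le_inner_add (h : IsUnitSpeedCurve γ T A B D K)
    (hJ : frameEquiv J (1, 0) = T 0) (hδ : K * δ ≤ 1 / 64) (hσ : σ ≤ δ / 4) (hs : |s| ≤ δ / 4)
    (hy : ‖y‖ < σ) :
    ‖tubeMap σ γ T A J (δ - s, y) - tubeMap σ γ T A J (s, y)‖ ≤
      ⟪tubeMap σ γ T A J (δ - s, y) - tubeMap σ γ T A J (s, y), T (δ / 2)⟫_ℝ +
        16 * K ^ 4 * δ ^ 5 := by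
  have hK := h.one_le_bound
  have hδ0 : 0 < δ := by linarith [norm_nonneg y]
  have hs' := abs_le.1 hs
  have herr := h.norm_tubeMap_sub_sub_smul_le hJ hδ hσ hs hy
  set d := tubeMap σ γ T A J (δ - s, y) - tubeMap σ γ T A J (s, y)
  set l := 2 * (δ / 2 - s) + 2 * (frameTilt J T (δ - s) y - frameTilt J T s y) with hl
  have htilt : ∀ r, |r| ≤ 5 / 4 * δ → |frameTilt J T r y| ≤ δ / 64 := fun r hr =>
    (h.abs_frameTilt_le hJ (by nlinarith)).trans (by
      nlinarith [mul_le_mul hr (hy.le.trans hσ) (norm_nonneg y) (by positivity)])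
  have htilts := abs_le.1 (htilt s (by linarith))
  have htiltb := abs_le.1 (htilt (δ - s) (abs_le.2 ⟨by linarith, by linarith⟩))
  have hsplit : ⟪d, T (δ / 2)⟫_ℝ = l + ⟪d - l • T (δ / 2), T (δ / 2)⟫_ℝ := by
    rw [inner_sub_left d, real_inner_smul_left, real_inner_self_eq_norm_sq, h.norm_tangent]
    ring
  have hrest : |⟪d - l • T (δ / 2), T (δ / 2)⟫_ℝ| ≤ 2 * K ^ 2 * δ ^ 3 :=
    (abs_real_inner_le_norm _ _).trans (by rwa [h.norm_tangent, mul_one])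
  have hsmall : 2 * K ^ 2 * δ ^ 3 ≤ δ / 64 := by
    nlinarith [mul_le_mul hδ hδ (by positivity) (by norm_num)]
  have hmain := norm_le_inner_add_sq_div (h.norm_tangent (δ / 2)) (m := δ / 4) (by linarith)
    (by rw [hsplit, hl]; linarith [neg_abs_le ⟪d - l • T (δ / 2), T (δ / 2)⟫_ℝ]) herr
  refine hmain.trans_eq ?_
  congr 1
  field_simp
  ring

end IsUnitSpeedCurve

end Displacement

section Mean

variable {F E : Type*} [NormedAddCommGroup F] [InnerProductSpace ℝ F]
  [NormedAddCommGroup E] [InnerProductSpace ℝ E]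
  {γ T A B D : ℝ → E} {K a b δ s t σ : ℝ} {J : WithLp 2 (ℝ × F) ≃ₗᵢ[ℝ] E} {y : F}

namespace IsUnitSpeedCurve

lemma abs_inner_curvature_tangent_le (h : IsUnitSpeedCurve γ T A B D K) (ha : |a| ≤ 1)
    (hb : |b| ≤ 1) : |⟪A a, T b⟫_ℝ| ≤ K ^ 2 * |b - a| := by
  have hperp : ⟪A a, T b⟫_ℝ = ⟪A a, T b - T a⟫_ℝ := by
    rw [inner_sub_right, real_inner_comm (T a), h.inner_tangent_curvature, sub_zero]
  rw [hperp, sq, mul_assoc]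
  exact (abs_real_inner_le_norm _ _).trans (mul_le_mul (h.norm_curvature_le a ha)
    (h.norm_tangent_sub_le ha hb) (norm_nonneg _) (zero_le_one.trans h.one_le_bound))

/- Opposite offsets cancel the frame; what is left of the flattening shift is its leading term. -/
lemma abs_inner_tubeMap_add_inner_tubeMap_neg_sub_le (h : IsUnitSpeedCurve γ T A B D K)
    (hJ : frameEquiv J (1, 0) = T 0) (ha : K * |a| ≤ 1 / 32) (hb : |b| ≤ 1)
    (hσ : K * σ ≤ 1 / 32) (hy : ‖y‖ < σ) :
    |⟪tubeMap σ γ T A J (a, y), T b⟫_ℝ + ⟪tubeMap σ γ T A J (a, -y), T b⟫_ℝ -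
      (2 * ⟪γ a, T b⟫_ℝ - (σ ^ 2 - ‖y‖ ^ 2) * ⟪A a, T b⟫_ℝ)| ≤ K ^ 3 * σ ^ 3 * |b - a| := by
  have hK := h.one_le_bound
  have hσ0 : 0 ≤ σ := (norm_nonneg y).trans hy.le
  have hκ := h.norm_normalCurvature_le hJ ha
  have hshift : ∀ z : F, ‖z‖ < σ →
      |flattenShift σ (normalCurvature J T A a) z - (σ ^ 2 - ‖z‖ ^ 2) / 2| ≤ K * σ ^ 3 / 2 :=
    fun z hz => (abs_flattenShift_sub_le (by nlinarith) hz).trans (by gcongr)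
  have hpos := hshift y hy
  have hneg := hshift (-y) (by rwa [norm_neg])
  rw [norm_neg] at hneg
  set c := flattenShift σ (normalCurvature J T A a)
  have hframe :
      frameEquiv (normalFrame J T a) (0, -y) = -frameEquiv (normalFrame J T a) (0, y) := by
    rw [← map_neg, Prod.neg_mk, neg_zero]
  have hsum : ⟪tubeMap σ γ T A J (a, y), T b⟫_ℝ + ⟪tubeMap σ γ T A J (a, -y), T b⟫_ℝ -
      (2 * ⟪γ a, T b⟫_ℝ - (σ ^ 2 - ‖y‖ ^ 2) * ⟪A a, T b⟫_ℝ) =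
      -((c y - (σ ^ 2 - ‖y‖ ^ 2) / 2) + (c (-y) - (σ ^ 2 - ‖y‖ ^ 2) / 2)) * ⟪A a, T b⟫_ℝ := by
    rw [h.tubeMap_eq hJ ha, h.tubeMap_eq hJ ha, hframe]
    simp only [inner_sub_left, inner_add_left, inner_neg_left, real_inner_smul_left]
    ring
  rw [hsum, abs_mul, abs_neg]
  calc _ ≤ (K * σ ^ 3 / 2 + K * σ ^ 3 / 2) * (K ^ 2 * |b - a|) :=
        mul_le_mul ((abs_add_le _ _).trans (add_le_add hpos hneg))
          (h.abs_inner_curvature_tangent_le (h.abs_le_one ha) hb) (abs_nonneg _) (by positivity)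
    _ = K ^ 3 * σ ^ 3 * |b - a| := by ring

lemma abs_inner_tubeMap_add_inner_tubeMap_neg_sub_le_of_midpoint
    (h : IsUnitSpeedCurve γ T A B D K) (hJ : frameEquiv J (1, 0) = T 0) (hδ : K * δ ≤ 1 / 64)
    (ha : |a| ≤ 5 / 4 * δ) (hσ : σ ≤ δ / 4) (hy : ‖y‖ < σ) (ha' : |δ / 2 - a| ≤ 3 / 4 * δ) :
    |⟪tubeMap σ γ T A J (a, y), T (δ / 2)⟫_ℝ + ⟪tubeMap σ γ T A J (a, -y), T (δ / 2)⟫_ℝ -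
      (2 * ⟪γ a, T (δ / 2)⟫_ℝ - (σ ^ 2 - ‖y‖ ^ 2) * ⟪A a, T (δ / 2)⟫_ℝ)| ≤
        3 / 256 * (K ^ 3 * δ ^ 4) := by
  have hK := h.one_le_bound
  have hσ0 : 0 < σ := (norm_nonneg y).trans_lt hy
  have hδ0 : 0 < δ := by linarith
  have hhalf : |δ / 2| ≤ 1 := by rw [abs_of_pos (half_pos hδ0)]; nlinarith
  calc _ ≤ K ^ 3 * σ ^ 3 * |δ / 2 - a| :=
        h.abs_inner_tubeMap_add_inner_tubeMap_neg_sub_le hJ (by nlinarith) hhalf (by nlinarith) hy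
    _ ≤ K ^ 3 * (δ / 4) ^ 3 * (3 / 4 * δ) := by gcongr
    _ = 3 / 256 * (K ^ 3 * δ ^ 4) := by ring

lemma abs_inner_curve_add_curve_sub_le (h : IsUnitSpeedCurve γ T A B D K) (b : ℝ)
    (hts : |t| + |s| ≤ 1) :
    |⟪γ (t + s), T b⟫_ℝ + ⟪γ (t - s), T b⟫_ℝ - 2 * ⟪γ t, T b⟫_ℝ - s ^ 2 * ⟪A t, T b⟫_ℝ| ≤
      2 * K * |s| ^ 4 := by
  have hcurve := norm_add_add_sub_two_smul_sub_le (zero_le_one.trans h.one_le_bound)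
    h.hasDerivAt_curve h.hasDerivAt_tangent h.hasDerivAt_curvature h.hasDerivAt_jerk
    (fun x hx => h.norm_snap_le x (by linarith [abs_sub_abs_le_abs_sub x t])) (le_refl |s|)
  have hinner := abs_real_inner_le_norm (γ (t + s) + γ (t - s) - (2 : ℝ) • γ t - s ^ 2 • A t) (T b)
  simp only [inner_sub_left, inner_add_left, real_inner_smul_left, h.norm_tangent,
    mul_one] at hinner
  exact hinner.trans hcurve

lemma abs_inner_curvature_add_curvature_sub_le (h : IsUnitSpeedCurve γ T A B D K) (b : ℝ)
    (hts : |t| + |s| ≤ 1) :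
    |⟪A (t + s), T b⟫_ℝ + ⟪A (t - s), T b⟫_ℝ - 2 * ⟪A t, T b⟫_ℝ| ≤ 2 * K * |s| ^ 2 := by
  have hcurv := norm_add_add_sub_two_smul_le (zero_le_one.trans h.one_le_bound)
    h.hasDerivAt_curvature h.hasDerivAt_jerk
    (fun x hx => h.norm_snap_le x (by linarith [abs_sub_abs_le_abs_sub x t])) (le_refl |s|)
  have hinner := abs_real_inner_le_norm (A (t + s) + A (t - s) - (2 : ℝ) • A t) (T b)
  simp only [inner_sub_left, inner_add_left, real_inner_smul_left, h.norm_tangent,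
    mul_one] at hinner
  exact hinner.trans hcurv

lemma abs_symmetrized_inner_tubeMap_sub_le (h : IsUnitSpeedCurve γ T A B D K)
    (hJ : frameEquiv J (1, 0) = T 0) (hδ : K * δ ≤ 1 / 64) (ht : t ∈ Icc 0 δ) (hσ : σ ≤ δ / 4)
    (hs : |s| ≤ δ / 4) (hy : ‖y‖ < σ) :
    |⟪tubeMap σ γ T A J (t + s, y), T (δ / 2)⟫_ℝ + ⟪tubeMap σ γ T A J (t + -s, y), T (δ / 2)⟫_ℝ +
      (⟪tubeMap σ γ T A J (t + s, -y), T (δ / 2)⟫_ℝ +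
        ⟪tubeMap σ γ T A J (t + -s, -y), T (δ / 2)⟫_ℝ) -
      4 * (⟪γ t, T (δ / 2)⟫_ℝ +
        (s ^ 2 / 2 - (σ ^ 2 - ‖y‖ ^ 2) / 2) * ⟪A t, T (δ / 2)⟫_ℝ)| ≤
      4 * (K ^ 3 * δ ^ 4 / 64) := by
  have hK := h.one_le_bound
  have hσ0 : 0 < σ := (norm_nonneg y).trans_lt hy
  have hδ0 : 0 < δ := by linarith
  have hδ1 : δ ≤ 1 / 64 := by nlinarith
  have hq0 := sq_sub_norm_sq_pos hy
  have hσ2 : σ ^ 2 ≤ (δ / 4) ^ 2 := by gcongr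
  have hs2 : |s| ^ 2 ≤ (δ / 4) ^ 2 := by gcongr
  have hts : |t| + |s| ≤ 5 / 4 * δ := by rw [abs_of_nonneg ht.1]; linarith [ht.2]
  have hs' := abs_le.1 hs
  have hplus := h.abs_inner_tubeMap_add_inner_tubeMap_neg_sub_le_of_midpoint hJ hδ
    ((abs_add_le t s).trans hts) hσ hy (abs_le.2 ⟨by linarith [ht.2], by linarith [ht.1]⟩)
  have hminus := h.abs_inner_tubeMap_add_inner_tubeMap_neg_sub_le_of_midpoint hJ hδ
    ((abs_sub t s).trans hts) hσ hy (abs_le.2 ⟨by linarith [ht.2], by linarith [ht.1]⟩)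
  have hcurve : _ ≤ 2 * K * ((δ / 4) ^ 2) ^ 2 :=
    (h.abs_inner_curve_add_curve_sub_le (δ / 2) (t := t) (s := s) (by linarith)).trans <| by
      rw [pow_mul |s| 2 2]
      gcongr
  have hcurv : |(σ ^ 2 - ‖y‖ ^ 2) * (⟪A (t + s), T (δ / 2)⟫_ℝ + ⟪A (t - s), T (δ / 2)⟫_ℝ -
      2 * ⟪A t, T (δ / 2)⟫_ℝ)| ≤ (δ / 4) ^ 2 * (2 * K * (δ / 4) ^ 2) := by
    rw [abs_mul, abs_of_pos hq0]
    refine mul_le_mul (by linarith [sq_nonneg ‖y‖]) ((h.abs_inner_curvature_add_curvature_sub_le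
      (δ / 2) (by linarith)).trans (by gcongr)) (abs_nonneg _) (by positivity)
  have hle : K * δ ^ 4 ≤ K ^ 3 * δ ^ 4 := by
    gcongr
    exact le_self_pow₀ hK three_ne_zero
  simp only [← sub_eq_add_neg]
  rw [abs_le] at hplus hminus hcurve hcurv ⊢
  constructor <;> linarith

end IsUnitSpeedCurve

end Mean

section Expansion

variable {F E : Type*} [NormedAddCommGroup F] [InnerProductSpace ℝ F]
  [NormedAddCommGroup E] [InnerProductSpace ℝ E]
  {γ T A B D : ℝ → E} {K δ s t σ ε : ℝ} {J : WithLp 2 (ℝ × F) ≃ₗᵢ[ℝ] E} {y : F}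

namespace IsUnitSpeedCurve

lemma norm_tubeMap_le (h : IsUnitSpeedCurve γ T A B D K) (hJ : frameEquiv J (1, 0) = T 0)
    (hs : K * |s| ≤ 1 / 32) (hσ : K * σ ≤ 1 / 32) (hy : ‖y‖ < σ) :
    ‖tubeMap σ γ T A J (s, y)‖ ≤ ‖γ 0‖ + 2 := by
  have hK := h.one_le_bound
  have hσ0 : 0 < σ := (norm_nonneg y).trans_lt hy
  have hs1 := h.abs_le_one hs
  have hκ : ‖normalCurvature J T A s‖ * σ < 1 := by nlinarith [h.norm_normalCurvature_le hJ hs]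
  have hcurve : ‖γ s - γ 0‖ ≤ 1 := by
    have := norm_sub_le_of_hasDerivAt (t := 0) (r := 1) (a := 0) (b := s) h.hasDerivAt_curve
      (fun x _ => (h.norm_tangent x).le) (by simp) (by simpa)
    rw [sub_zero] at this
    linarith
  have hshift : ‖flattenShift σ (normalCurvature J T A s) y • A s‖ ≤ σ ^ 2 / 2 * K := by
    rw [norm_smul, Real.norm_of_nonneg (flattenShift_pos hκ hy).le]
    exact mul_le_mul (flattenShift_le hκ hy) (h.norm_curvature_le s hs1) (norm_nonneg _)
      (by positivity)
  rw [h.tubeMap_eq hJ hs]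
  refine (norm_sub_le _ _).trans ((add_le_add ((norm_add_le _ _).trans
    (add_le_add_left (norm_le_norm_add_norm_sub' (γ s) (γ 0)) _)) hshift).trans ?_)
  rw [norm_frameEquiv_inr]
  nlinarith

variable [FiniteDimensional ℝ F] [MeasurableSpace F] [BorelSpace F]

lemma ae_norm_tubeMap_add_le (h : IsUnitSpeedCurve γ T A B D K)
    (hJ : frameEquiv J (1, 0) = T 0) (hδ : K * δ ≤ 1 / 64) (ht : |t| ≤ δ) (hσ : σ ≤ δ / 4)
    (hε : ε ≤ δ / 4) : ∀ᵐ p ∂normRestrict (solidCylinder F σ ε),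
      ‖tubeMap σ γ T A J (t + p.1, p.2)‖ ≤ ‖γ 0‖ + 2 := by
  have hK := h.one_le_bound
  filter_upwards [ae_mem_normRestrict_solidCylinder] with p ⟨hs, hy⟩
  exact h.norm_tubeMap_le hJ (by nlinarith [abs_add_le t p.1]) (by nlinarith [norm_nonneg p.2]) hy

variable [FiniteDimensional ℝ E] [MeasurableSpace E] [BorelSpace E]

lemma measurable_tubeMap (h : IsUnitSpeedCurve γ T A B D K) (σ : ℝ)
    (J : WithLp 2 (ℝ × F) ≃ₗᵢ[ℝ] E) : Measurable (tubeMap σ γ T A J) := by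
  have hmeas : ∀ {f f' : ℝ → E}, (∀ s, HasDerivAt f (f' s) s) → Measurable f := fun hf =>
    (continuous_iff_continuousAt.2 fun s => (hf s).continuousAt).measurable
  exact (measurable_sweep_normalFrame (hmeas h.hasDerivAt_curve) (hmeas h.hasDerivAt_tangent)).comp
    (measurable_unflattenMap (measurable_normalCurvature (hmeas h.hasDerivAt_tangent)
      (hmeas h.hasDerivAt_curvature)))

lemma measurable_tubeMap_add (h : IsUnitSpeedCurve γ T A B D K) (σ : ℝ)
    (J : WithLp 2 (ℝ × F) ≃ₗᵢ[ℝ] E) (t : ℝ) :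
    Measurable fun p : ℝ × F => tubeMap σ γ T A J (t + p.1, p.2) :=
  (h.measurable_tubeMap σ J).comp (by fun_prop)

lemma integrable_inner_tubeMap_add (h : IsUnitSpeedCurve γ T A B D K)
    (hJ : frameEquiv J (1, 0) = T 0) (hδ : K * δ ≤ 1 / 64) (ht : |t| ≤ δ) (hσ0 : 0 < σ)
    (hε0 : 0 < ε) (hσ : σ ≤ δ / 4) (hε : ε ≤ δ / 4) (u : E) :
    Integrable (fun p => ⟪tubeMap σ γ T A J (t + p.1, p.2), u⟫_ℝ)
      (normRestrict (solidCylinder F σ ε)) := by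
  have := isProbabilityMeasure_normRestrict_solidCylinder (F := F) hσ0 hε0
  refine .of_bound ((h.measurable_tubeMap_add σ J t).inner_const).aestronglyMeasurable
    ((‖γ 0‖ + 2) * ‖u‖) ?_
  filter_upwards [h.ae_norm_tubeMap_add_le hJ hδ ht hσ hε] with p hp
  exact (norm_inner_le_norm _ _).trans (by gcongr)

lemma abs_integral_inner_tubeMap_sub_le (h : IsUnitSpeedCurve γ T A B D K)
    (hJ : frameEquiv J (1, 0) = T 0) (hδ : K * δ ≤ 1 / 64) (ht : t ∈ Icc 0 δ) (hσ0 : 0 < σ)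
    (hε0 : 0 < ε) (hσ : σ ≤ δ / 4) (hε : ε ≤ δ / 4) :
    |∫ p, ⟪tubeMap σ γ T A J (t + p.1, p.2), T (δ / 2)⟫_ℝ ∂normRestrict (solidCylinder F σ ε) -
      (⟪γ t, T (δ / 2)⟫_ℝ +
        (ε ^ 2 / 6 - σ ^ 2 / (Module.finrank ℝ F + 2)) * ⟪A t, T (δ / 2)⟫_ℝ)| ≤
      K ^ 3 * δ ^ 4 / 64 := by
  have := isProbabilityMeasure_normRestrict_solidCylinder (F := F) hσ0 hε0
  have hmoment := (integrable_sq_sub_sq_normRestrict_solidCylinder (F := F) hσ0 hε0).mul_const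
    ⟪A t, T (δ / 2)⟫_ℝ
  have hmodel : ∫ p, (⟪γ t, T (δ / 2)⟫_ℝ + (p.1 ^ 2 / 2 - (σ ^ 2 - ‖p.2‖ ^ 2) / 2) *
      ⟪A t, T (δ / 2)⟫_ℝ) ∂normRestrict (solidCylinder F σ ε) = ⟪γ t, T (δ / 2)⟫_ℝ +
        (ε ^ 2 / 6 - σ ^ 2 / (Module.finrank ℝ F + 2)) * ⟪A t, T (δ / 2)⟫_ℝ := by
    rw [integral_add (integrable_const _) hmoment, integral_const, probReal_univ, one_smul,
      integral_mul_const, integral_sq_sub_sq_normRestrict_solidCylinder hσ0 hε0]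
  rw [← hmodel]
  refine abs_integral_sub_integral_le_of_symmetrization
    (measurePreserving_neg_fst_solidCylinder hσ0 hε0)
    (measurePreserving_neg_snd_solidCylinder hσ0 hε0)
    (h.integrable_inner_tubeMap_add hJ hδ (by rw [abs_of_nonneg ht.1]; exact ht.2) hσ0 hε0 hσ hε _)
    ((integrable_const _).add hmoment) ?_
  filter_upwards [ae_mem_normRestrict_solidCylinder] with p ⟨hs, hy⟩
  exact h.abs_symmetrized_inner_tubeMap_sub_le hJ hδ ht hσ (hs.le.trans hε) hy

lemma abs_W1_normalTube_sub_le (h : IsUnitSpeedCurve γ T A B D K)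
    (hJ : frameEquiv J (1, 0) = T 0) (hδ : K * δ ≤ 1 / 64) (hσ0 : 0 < σ)
    (hε0 : 0 < ε) (hσ : σ ≤ δ / 4) (hε : ε ≤ δ / 4) :
    |W1 (normRestrict (normalTube γ 0 σ ε)) (normRestrict (normalTube γ δ σ ε)) -
      (∫ p, ⟪tubeMap σ γ T A J (δ + p.1, p.2), T (δ / 2)⟫_ℝ ∂normRestrict (solidCylinder F σ ε) -
        ∫ p, ⟪tubeMap σ γ T A J (0 + p.1, p.2), T (δ / 2)⟫_ℝ ∂normRestrict (solidCylinder F σ ε))| ≤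
      16 * K ^ 4 * δ ^ 5 := by
  have := isProbabilityMeasure_normRestrict_solidCylinder (F := F) hσ0 hε0
  have hδ0 : 0 ≤ δ := by linarith
  have h0 : |(0 : ℝ)| ≤ δ := by rwa [abs_zero]
  have h1 : |δ| ≤ δ := (abs_of_nonneg hδ0).le
  rw [h.normRestrict_normalTube hJ hδ h0 hσ hε, h.normRestrict_normalTube hJ hδ h1 hσ hε]
  refine abs_W1_map_map_sub_le (h.measurable_tubeMap_add σ J 0) (h.measurable_tubeMap_add σ J δ)
    (measurePreserving_neg_fst_solidCylinder hσ0 hε0) (h.norm_tangent _)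
    (h.ae_norm_tubeMap_add_le hJ hδ h0 hσ hε) (h.ae_norm_tubeMap_add_le hJ hδ h1 hσ hε) ?_
  filter_upwards [ae_mem_normRestrict_solidCylinder] with p ⟨hs, hy⟩
  rw [zero_add, ← sub_eq_add_neg]
  exact h.norm_tubeMap_sub_le_inner_add hJ hδ hσ (hs.le.trans hε) hy

end IsUnitSpeedCurve

end Expansion

section Distance

variable {E : Type*} [NormedAddCommGroup E] [InnerProductSpace ℝ E] {γ T A B D : ℝ → E} {K δ : ℝ}

namespace IsUnitSpeedCurve

lemma norm_chord_sub_smul_tangent_le (h : IsUnitSpeedCurve γ T A B D K) (hδ0 : 0 ≤ δ)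
    (hδ : K * δ ≤ 1 / 64) : ‖γ δ - γ 0 - δ • T (δ / 2)‖ ≤ 27 / 32 * K * δ ^ 3 := by
  have := h.norm_curve_sub_sub_smul_tangent_le hδ (s := 0)
    (by rw [sub_zero, abs_of_nonneg (by positivity)]; linarith)
  rwa [sub_zero, sub_zero, mul_div_cancel₀ δ two_ne_zero] at this

lemma abs_norm_chord_sub_le (h : IsUnitSpeedCurve γ T A B D K) (hδ0 : 0 ≤ δ)
    (hδ : K * δ ≤ 1 / 64) : |‖γ δ - γ 0‖ - δ| ≤ 27 / 32 * K * δ ^ 3 := by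
  have hle := (abs_norm_sub_norm_le _ _).trans (h.norm_chord_sub_smul_tangent_le hδ0 hδ)
  rwa [norm_smul, h.norm_tangent, mul_one, Real.norm_of_nonneg hδ0] at hle

lemma abs_norm_chord_sub_inner_le (h : IsUnitSpeedCurve γ T A B D K) (hδ0 : 0 < δ)
    (hδ : K * δ ≤ 1 / 64) :
    |‖γ δ - γ 0‖ - ⟪γ δ - γ 0, T (δ / 2)⟫_ℝ| ≤ K * δ ^ 4 / 32 := by
  have hK := h.one_le_bound
  have herr := h.norm_chord_sub_smul_tangent_le hδ0.le hδ
  have hsmall : 27 / 32 * K * δ ^ 3 ≤ δ / 2 := by nlinarith [pow_pos hδ0 2]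
  have hrest := (abs_real_inner_le_norm _ _).trans
    (mul_le_mul_of_nonneg_right herr (norm_nonneg (T (δ / 2))))
  have hlower : δ / 2 ≤ ⟪γ δ - γ 0, T (δ / 2)⟫_ℝ := by
    rw [inner_sub_left (γ δ - γ 0), real_inner_smul_left, real_inner_self_eq_norm_sq,
      h.norm_tangent] at hrest
    linarith [(abs_le.1 hrest).1]
  have hupper := norm_le_inner_add_sq_div (h.norm_tangent (δ / 2)) (half_pos hδ0) hlower herr
  have hcs := real_inner_le_norm (γ δ - γ 0) (T (δ / 2))
  rw [h.norm_tangent, mul_one] at hcs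
  rw [abs_of_nonneg (sub_nonneg.2 hcs)]
  calc _ ≤ (27 / 32 * K * δ ^ 3) ^ 2 / (δ / 2) := by linarith
    _ = 729 / 512 * (K * δ) * (K * δ ^ 4) := by field_simp; ring
    _ ≤ 729 / 512 * (1 / 64) * (K * δ ^ 4) := by gcongr
    _ ≤ K * δ ^ 4 / 32 := by nlinarith [show 0 ≤ K * δ ^ 4 by positivity]

/- Since `T` and `A` are orthogonal, `⟪T, B⟫ = -‖A‖²`: the curvature vector turns against the
direction of travel. -/
lemma abs_inner_curvature_sub_add_le (h : IsUnitSpeedCurve γ T A B D K) (hδ0 : 0 ≤ δ)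
    (hδ : K * δ ≤ 1 / 64) :
    |⟪A δ - A 0, T (δ / 2)⟫_ℝ + ‖A 0‖ ^ 2 * ‖γ δ - γ 0‖| ≤ 2 * K ^ 2 * δ ^ 2 := by
  have hK := h.one_le_bound
  have h0 : |(0 : ℝ)| ≤ 1 := by simp
  have habs : |δ| ≤ 1 := by rw [abs_of_nonneg hδ0]; nlinarith
  have hhalf : |δ / 2| ≤ 1 := by rw [abs_of_nonneg (by positivity)]; nlinarith
  have htaylor : |⟪A δ - A 0 - δ • B 0, T (δ / 2)⟫_ℝ| ≤ K * δ ^ 2 := by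
    have := h.norm_curvature_sub_sub_smul_le h0 habs
    rw [sub_zero, sq_abs] at this
    refine (abs_real_inner_le_norm _ _).trans ?_
    rwa [h.norm_tangent, mul_one]
  have hjerk : |⟪B 0, T (δ / 2) - T 0⟫_ℝ| ≤ K * (K * (δ / 2)) := by
    have := h.norm_tangent_sub_le h0 hhalf
    rw [sub_zero, abs_of_nonneg (by positivity)] at this
    exact (abs_real_inner_le_norm _ _).trans
      (mul_le_mul (h.norm_jerk_le 0 h0) this (norm_nonneg _) (by positivity))
  have hlength : |‖A 0‖ ^ 2 * (‖γ δ - γ 0‖ - δ)| ≤ K ^ 2 * (27 / 32 * K * δ ^ 3) := by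
    rw [abs_mul, abs_of_nonneg (sq_nonneg _)]
    exact mul_le_mul (pow_le_pow_left₀ (norm_nonneg _) (h.norm_curvature_le 0 h0) 2)
      (h.abs_norm_chord_sub_le hδ0 hδ) (abs_nonneg _) (by positivity)
  have hsplit : ⟪A δ - A 0, T (δ / 2)⟫_ℝ + ‖A 0‖ ^ 2 * ‖γ δ - γ 0‖ =
      ⟪A δ - A 0 - δ • B 0, T (δ / 2)⟫_ℝ + δ * ⟪B 0, T (δ / 2) - T 0⟫_ℝ +
        ‖A 0‖ ^ 2 * (‖γ δ - γ 0‖ - δ) := by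
    rw [inner_sub_left (A δ - A 0), real_inner_smul_left, inner_sub_right, real_inner_comm (T 0),
      h.inner_tangent_jerk]
    ring
  rw [hsplit]
  refine (abs_add_three _ _ _).trans ?_
  rw [abs_mul, abs_of_nonneg hδ0]
  have hKδ : K ^ 2 * (27 / 32 * K * δ ^ 3) ≤ K ^ 2 * δ ^ 2 / 4 := by
    nlinarith [show 0 ≤ K ^ 2 * δ ^ 2 by positivity]
  have hKsq : K * δ ^ 2 ≤ K ^ 2 * δ ^ 2 := by gcongr; exact le_self_pow₀ hK two_ne_zero
  linarith [mul_le_mul_of_nonneg_left hjerk hδ0, show 0 ≤ K ^ 2 * δ ^ 2 by positivity]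

theorem abs_W1_normalTube_sub_norm_mul_le {F : Type*} [NormedAddCommGroup F]
    [InnerProductSpace ℝ F] [FiniteDimensional ℝ F] [MeasurableSpace F] [BorelSpace F]
    [FiniteDimensional ℝ E] [MeasurableSpace E] [BorelSpace E] {σ ε : ℝ}
    {J : WithLp 2 (ℝ × F) ≃ₗᵢ[ℝ] E} (h : IsUnitSpeedCurve γ T A B D K)
    (hJ : frameEquiv J (1, 0) = T 0) (hδ : K * δ ≤ 1 / 64) (hσ0 : 0 < σ)
    (hε0 : 0 < ε) (hσ : σ ≤ δ / 4) (hε : ε ≤ δ / 4) :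
    |W1 (normRestrict (normalTube γ 0 σ ε)) (normRestrict (normalTube γ δ σ ε)) -
      ‖γ δ - γ 0‖ * (1 + (σ ^ 2 / (Module.finrank ℝ F + 2) - ε ^ 2 / 6) * ‖A 0‖ ^ 2)| ≤
      K ^ 3 * δ ^ 4 := by
  have hK := h.one_le_bound
  have hδ0 : 0 < δ := by linarith
  set c := ε ^ 2 / 6 - σ ^ 2 / (Module.finrank ℝ F + 2) with hc
  have hcost := h.abs_W1_normalTube_sub_le hJ hδ hσ0 hε0 hσ hε
  have hmean₀ := h.abs_integral_inner_tubeMap_sub_le hJ hδ ⟨le_rfl, hδ0.le⟩ hσ0 hε0 hσ hε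
  have hmean₁ := h.abs_integral_inner_tubeMap_sub_le hJ hδ ⟨hδ0.le, le_rfl⟩ hσ0 hε0 hσ hε
  have hchord := h.abs_norm_chord_sub_inner_le hδ0 hδ
  have hmoment : |c| ≤ δ ^ 2 / 16 := by
    have hσ' : σ ^ 2 / (Module.finrank ℝ F + 2) ≤ δ ^ 2 / 16 :=
      (div_le_self (sq_nonneg σ) (by linarith)).trans (by nlinarith)
    have := show 0 ≤ σ ^ 2 / (Module.finrank ℝ F + 2) by positivity
    exact abs_le.2 ⟨by nlinarith, by nlinarith⟩
  have hcurvature : |c * (⟪A δ - A 0, T (δ / 2)⟫_ℝ + ‖A 0‖ ^ 2 * ‖γ δ - γ 0‖)| ≤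
      K ^ 2 * δ ^ 4 / 8 := by
    rw [abs_mul]
    refine (mul_le_mul hmoment (h.abs_inner_curvature_sub_add_le hδ0.le hδ) (abs_nonneg _)
      (by positivity)).trans_eq ?_
    ring
  have hcost' : 16 * K ^ 4 * δ ^ 5 ≤ K ^ 3 * δ ^ 4 / 4 := by
    nlinarith [show 0 ≤ K ^ 3 * δ ^ 4 by positivity]
  have hK₁ : K * δ ^ 4 ≤ K ^ 3 * δ ^ 4 := by gcongr; exact le_self_pow₀ hK (by norm_num)
  have hK₂ : K ^ 2 * δ ^ 4 ≤ K ^ 3 * δ ^ 4 := by gcongr; norm_num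
  rw [← neg_sub (ε ^ 2 / 6), ← hc]
  rw [← hc] at hmean₀ hmean₁
  rw [inner_sub_left] at hchord hcurvature
  rw [abs_le] at *
  constructor <;> linarith

end IsUnitSpeedCurve

end Distance

section General

variable {E : Type*} [NormedAddCommGroup E] [InnerProductSpace ℝ E] {γ : ℝ → E}

lemma exists_isUnitSpeedCurve (hγ : ContDiff ℝ 4 γ) (hunit : ∀ s, ‖deriv γ s‖ = 1) :
    ∃ K, IsUnitSpeedCurve γ (deriv γ) (deriv (deriv γ)) (deriv (deriv (deriv γ)))
      (deriv (deriv (deriv (deriv γ)))) K := by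
  have h₁ : ContDiff ℝ 3 (deriv γ) := ((contDiff_succ_iff_deriv (n := 3)).1 hγ).2.2
  have h₂ : ContDiff ℝ 2 (deriv (deriv γ)) := ((contDiff_succ_iff_deriv (n := 2)).1 h₁).2.2
  have h₃ : ContDiff ℝ 1 (deriv (deriv (deriv γ))) :=
    ((contDiff_succ_iff_deriv (n := 1)).1 h₂).2.2
  have hbound : ∀ f : ℝ → E, Continuous f → ∃ K, ∀ s, |s| ≤ 1 → ‖f s‖ ≤ K := fun f hf => by
    obtain ⟨K, hK⟩ := isCompact_Icc.exists_bound_of_continuousOn (s := Icc (-1) 1) hf.continuousOn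
    exact ⟨K, fun s hs => hK s (abs_le.1 hs)⟩
  obtain ⟨K₂, hK₂⟩ := hbound _ h₂.continuous
  obtain ⟨K₃, hK₃⟩ := hbound _ h₃.continuous
  obtain ⟨K₄, hK₄⟩ := hbound _ (h₃.continuous_deriv le_rfl)
  have hderiv : ∀ {f : ℝ → E} {m : WithTop ℕ∞}, ContDiff ℝ m f → m ≠ 0 → ∀ s,
      HasDerivAt f (deriv f s) s := fun hf hm s => (hf.differentiable hm s).hasDerivAt
  exact ⟨max 1 (max K₂ (max K₃ K₄)), hderiv hγ (by norm_num), hderiv h₁ (by norm_num),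
    hderiv h₂ (by norm_num), hderiv h₃ (by norm_num), hunit, le_max_left _ _,
    fun s hs => (hK₂ s hs).trans (by simp), fun s hs => (hK₃ s hs).trans (by simp),
    fun s hs => (hK₄ s hs).trans (by simp)⟩

theorem space_curve_wasserstein_expansion_general [FiniteDimensional ℝ E] [MeasurableSpace E]
    [BorelSpace E] (hγ : ContDiff ℝ 4 γ) (hunit : ∀ s, ‖deriv γ s‖ = 1) {δ₀ : ℝ} (hδ₀ : 0 < δ₀) :
    ∃ C > (0 : ℝ), ∃ δ₁ ∈ Ioc (0 : ℝ) δ₀, ∀ δ ∈ Ioc (0 : ℝ) δ₁, ∀ σ ε : ℝ,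
      0 < σ → 0 < ε → max σ ε ≤ δ / 4 →
      |W1 (normRestrict (normalTube γ 0 σ ε)) (normRestrict (normalTube γ δ σ ε)) -
        ‖γ 0 - γ δ‖ * (1 + (σ ^ 2 / (Module.finrank ℝ E + 1) - ε ^ 2 / 6) *
          ‖deriv (deriv γ) 0‖ ^ 2)| ≤ C * δ ^ 4 := by
  obtain ⟨K, h⟩ := exists_isUnitSpeedCurve hγ hunit
  have hK : 0 < K := one_pos.trans_le h.one_le_bound
  have : Nontrivial E := ⟨⟨deriv γ 0, 0, fun h0 => by simpa [h0] using hunit 0⟩⟩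
  obtain ⟨d, hd⟩ := Nat.exists_eq_succ_of_ne_zero (Module.finrank_pos (R := ℝ) (M := E)).ne'
  obtain ⟨J, hJ⟩ := exists_frameEquiv_one_eq (F := EuclideanSpace ℝ (Fin d)) (by simpa using hd)
    (hunit 0)
  refine ⟨K ^ 3, by positivity, min (1 / (64 * K)) δ₀, ⟨by positivity, min_le_right _ _⟩,
    fun δ hδ σ ε hσ hε hmax => ?_⟩
  have hKδ : K * δ ≤ 1 / 64 := by
    have := mul_le_mul_of_nonneg_left (hδ.2.trans (min_le_left _ _)) hK.le
    rwa [show K * (1 / (64 * K)) = 1 / 64 by field_simp] at this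
  have hmain := h.abs_W1_normalTube_sub_norm_mul_le hJ hKδ hσ hε ((le_max_left _ _).trans hmax)
    ((le_max_right _ _).trans hmax)
  rw [norm_sub_rev, hd]
  convert hmain using 7
  rw [finrank_euclideanSpace_fin]
  push_cast
  ring

end General

section Frame

variable {E : Type*} [NormedAddCommGroup E] [InnerProductSpace ℝ E]

lemma norm_smul_add_smul_sq {u v : E} (hu : ‖u‖ = 1) (hv : ‖v‖ = 1) (huv : ⟪u, v⟫_ℝ = 0)
    (x y : ℝ) : ‖x • u + y • v‖ ^ 2 = x ^ 2 + y ^ 2 := by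
  rw [norm_add_sq_real, inner_smul_left, inner_smul_right, huv, norm_smul, norm_smul, hu, hv]
  simp

lemma exists_eq_smul_add_smul_of_orthonormal (hdim : Module.finrank ℝ E = 3) {u v w x : E}
    (h : Orthonormal ℝ ![u, v, w]) (hx : ⟪u, x⟫_ℝ = 0) : ∃ y z : ℝ, x = y • v + z • w := by
  have : FiniteDimensional ℝ E := .of_finrank_pos (by omega)
  let b := basisOfOrthonormalOfCardEqFinrank h (by simp [hdim])
  let e := b.toOrthonormalBasis (by simpa [b] using h)
  refine ⟨⟪v, x⟫_ℝ, ⟪w, x⟫_ℝ, ?_⟩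
  have hsum := e.sum_repr' x
  simpa [Fin.sum_univ_three, e, b, hx] using hsum.symm

lemma image_frame_eq_normalTube (hdim : Module.finrank ℝ E = 3) {γ n b : ℝ → E} {t σ ε : ℝ}
    (hσ : 0 ≤ σ) (hframe : ∀ s ∈ Ioo (t - ε) (t + ε), Orthonormal ℝ ![deriv γ s, n s, b s]) :
    (fun p : ℝ × ℝ × ℝ => γ p.1 + p.2.1 • n p.1 + p.2.2 • b p.1) ''
      {p | p.1 ∈ Ioo (t - ε) (t + ε) ∧ p.2.1 ^ 2 + p.2.2 ^ 2 < σ ^ 2} = normalTube γ t σ ε := by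
  have hnorm : ∀ s ∈ Ioo (t - ε) (t + ε), ∀ x y : ℝ,
      ‖x • n s + y • b s‖ < σ ↔ x ^ 2 + y ^ 2 < σ ^ 2 := fun s hs x y => by
    have h := hframe s hs
    rw [← norm_smul_add_smul_sq (h.1 1) (h.1 2) (h.2 (by decide : (1 : Fin 3) ≠ 2))]
    exact (pow_lt_pow_iff_left₀ (norm_nonneg _) hσ two_ne_zero).symm
  ext z
  constructor
  · rintro ⟨⟨s, x, y⟩, ⟨hs, hxy⟩, rfl⟩
    have h := hframe s hs
    have hn : ⟪deriv γ s, n s⟫_ℝ = 0 := h.2 (by decide : (0 : Fin 3) ≠ 1)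
    have hb : ⟪deriv γ s, b s⟫_ℝ = 0 := h.2 (by decide : (0 : Fin 3) ≠ 2)
    refine ⟨s, hs, x • n s + y • b s, ?_, (hnorm s hs x y).2 hxy, (add_assoc _ _ _).symm⟩
    rw [inner_add_right, inner_smul_right, inner_smul_right, hn, hb, mul_zero, mul_zero, add_zero]
  · rintro ⟨s, hs, w, hperp, hw, rfl⟩
    obtain ⟨x, y, rfl⟩ := exists_eq_smul_add_smul_of_orthonormal hdim (hframe s hs) hperp
    exact ⟨(s, x, y), ⟨hs, (hnorm s hs x y).1 hw⟩, add_assoc _ _ _⟩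

lemma orthonormal_cross3 {u v : EuclideanSpace ℝ (Fin 3)} (hu : ‖u‖ = 1) (hv : ‖v‖ = 1)
    (huv : ⟪u, v⟫_ℝ = 0) : Orthonormal ℝ ![u, v, cross3 u v] := by
  have hcross : (cross3 u v).ofLp = crossProduct u.ofLp v.ofLp := (cross_apply _ _).symm
  have hdot : ∀ x y : EuclideanSpace ℝ (Fin 3), ⟪x, y⟫_ℝ = x.ofLp ⬝ᵥ y.ofLp := fun x y => by
    rw [EuclideanSpace.inner_eq_star_dotProduct, star_trivial, dotProduct_comm]
  have huw : ⟪u, cross3 u v⟫_ℝ = 0 := by rw [hdot, hcross, dot_self_cross]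
  have hvw : ⟪v, cross3 u v⟫_ℝ = 0 := by rw [hdot, hcross, dot_cross_self]
  have hww : ‖cross3 u v‖ = 1 := by
    rw [← sq_eq_sq₀ (norm_nonneg _) zero_le_one, ← real_inner_self_eq_norm_sq, hdot, hcross,
      cross_dot_cross, ← hdot, ← hdot, ← hdot, huv, zero_mul,
      real_inner_self_eq_norm_sq, real_inner_self_eq_norm_sq, hu, hv]
    norm_num
  simp [orthonormal_vecCons_iff, hu, hv, hww, huv, huw, hvw]

lemma orthonormal_tangent_normal_binormal {γ : ℝ → EuclideanSpace ℝ (Fin 3)}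
    (hγ : ContDiff ℝ 2 γ) (hunit : ∀ s, ‖deriv γ s‖ = 1) {s : ℝ} (hs : deriv (deriv γ) s ≠ 0) :
    Orthonormal ℝ ![deriv γ s, ‖deriv (deriv γ) s‖⁻¹ • deriv (deriv γ) s,
      cross3 (deriv γ s) (‖deriv (deriv γ) s‖⁻¹ • deriv (deriv γ) s)] := by
  refine orthonormal_cross3 (hunit s) (norm_smul_inv_norm hs) ?_
  rw [inner_smul_right, inner_eq_zero_of_hasDerivAt_of_norm_eq_one
    (hγ.differentiable_deriv_two s).hasDerivAt hunit, mul_zero]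

end Frame

/-- Coarse extrinsic curvature expansion for a space curve:
`W₁(μ_{x₀}^{σ,ε}, μ_y^{σ,ε}) = ‖x₀ − y‖ (1 + σ²/(4R²) − ε²/(6R²)) + O(δ⁴)`. -/
theorem space_curve_wasserstein_expansion
    (δ₀ : ℝ) (hδ₀ : 0 < δ₀)
    (γ : ℝ → EuclideanSpace ℝ (Fin 3)) (hγ : ContDiff ℝ (⊤ : ℕ∞) γ)
    (hunit : ∀ α : ℝ, ‖deriv γ α‖ = 1)
    (hcurv : ∀ α ∈ Icc (-δ₀) (2 * δ₀), deriv (deriv γ) α ≠ 0)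
    (R : ℝ → ℝ) (hR : ∀ α : ℝ, R α = ‖deriv (deriv γ) α‖⁻¹)
    (n : ℝ → EuclideanSpace ℝ (Fin 3)) (hn : ∀ α : ℝ, n α = R α • deriv (deriv γ) α)
    (b : ℝ → EuclideanSpace ℝ (Fin 3)) (hb : ∀ α : ℝ, b α = cross3 (deriv γ α) (n α))
    (Ψ : ℝ × ℝ × ℝ → EuclideanSpace ℝ (Fin 3))
    (hΨ : ∀ p : ℝ × ℝ × ℝ, Ψ p = γ p.1 + p.2.1 • n p.1 + p.2.2 • b p.1)
    (hinj : InjOn Ψ {p : ℝ × ℝ × ℝ |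
      p.1 ∈ Icc (-δ₀) (2 * δ₀) ∧ p.2.1 ^ 2 + p.2.2 ^ 2 ≤ δ₀ ^ 2})
    (μ : ℝ → ℝ → ℝ → Measure (EuclideanSpace ℝ (Fin 3)))
    (hμ : ∀ t σ ε : ℝ, μ t σ ε = normRestrict (Ψ '' {p : ℝ × ℝ × ℝ |
      p.1 ∈ Ioo (t - ε) (t + ε) ∧ p.2.1 ^ 2 + p.2.2 ^ 2 < σ ^ 2})) :
    ∃ C > (0:ℝ), ∃ δ₁ ∈ Ioc (0:ℝ) δ₀, ∀ δ ∈ Ioc (0:ℝ) δ₁, ∀ σ ε : ℝ,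
      0 < σ → 0 < ε → max σ ε ≤ δ / 4 →
      |W1 (μ 0 σ ε) (μ δ σ ε) -
        ‖γ 0 - γ δ‖ * (1 + σ ^ 2 / (4 * R 0 ^ 2) - ε ^ 2 / (6 * R 0 ^ 2))| ≤ C * δ ^ 4 := by
  obtain ⟨C, hC, δ₁, hδ₁, hmain⟩ := space_curve_wasserstein_expansion_general
    (contDiff_infty.1 hγ 4) hunit hδ₀
  refine ⟨C, hC, δ₁, hδ₁, fun δ hδ σ ε hσ hε hmax => ?_⟩
  have hεδ : ε ≤ δ / 4 := (le_max_right _ _).trans hmax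
  have hframe : ∀ s ∈ Icc (-δ₀) (2 * δ₀), Orthonormal ℝ ![deriv γ s, n s, b s] := fun s hs => by
    rw [hb, hn, hR]
    exact orthonormal_tangent_normal_binormal (contDiff_infty.1 hγ 2) hunit (hcurv s hs)
  have htube : ∀ t ∈ Icc 0 δ, μ t σ ε = normRestrict (normalTube γ t σ ε) := fun t ht => by
    rw [hμ, funext hΨ, image_frame_eq_normalTube finrank_euclideanSpace_fin hσ.le fun s hs =>
      hframe s ⟨by linarith [hs.1, ht.1, hδ.2, hδ₁.2], by linarith [hs.2, ht.2, hδ.2, hδ₁.2]⟩]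
  rw [htube 0 ⟨le_rfl, hδ.1.le⟩, htube δ ⟨hδ.1.le, le_rfl⟩, hR]
  convert hmain δ hδ σ ε hσ hε hmax using 4
  rw [finrank_euclideanSpace_fin, inv_pow]
  simp only [div_eq_mul_inv, mul_inv, inv_inv]
  ring
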